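/- arXiv:0903.4826 — 5 statements merged into one kernel-verified Lean document; each statement's English description precedes it below -/
import Mathlib

section
/- Let R = 𝔽_2[x]/(x^47 − 1), f_1 = x^23 + x^22 + x^21 + x^20 + x^18 + x^17 + x^16 + x^14 + x^13 + x^11 + x^10 + x^9 + x^5 + x^4 + 1, f_2 = (x^47 − 1)/(x + 1), and g = x^20 + x^19 + x^13 + x^12 + x^11 + x^9 + x^7 + x^4 + x^3 + x^2 + 1, all regarded in R. Let C = {(c_1, c_1·g + c_2) : c_1 ∈ (f_1), c_2 ∈ (f_2)} ⊆ R^2, where (f_i) denotes the ideal of R generated by f_i. Then, under the coefficient identification R^2 ≅ 𝔽_2^{94}, C is an 𝔽_2-linear code of length 94 and dimension 25 in which every nonzero codeword has Hamming weight at least 27. -/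
open Polynomial

/-- `R = F[x]/(x^m - 1)` -/
abbrev Rng (F : Type*) [Field F] (m : ℕ) : Type _ := AdjoinRoot (X ^ m - 1 : F[X])

theorem monicXm {F : Type*} [Field F] {m : ℕ} (hm : m ≠ 0) :
    (X ^ m - 1 : F[X]).Monic := by
  simpa using Polynomial.monic_X_pow_sub_C (1 : F) hm

/-- Hamming weight of an element of `R` under the coefficient identification
`R ≅ F^m`: the number of nonzero coefficients of the canonical representative
of degree `< m`. -/
noncomputable def wt {F : Type*} [Field F] {m : ℕ} (hm : m ≠ 0) (r : Rng F m) : ℕ :=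
  (AdjoinRoot.modByMonicHom (monicXm hm) r).support.card

/-- `R`-Hamming weight of a vector over `R`: the number of nonzero coordinates. -/
noncomputable def rwt {R : Type*} [Zero R] {l : ℕ} (v : Fin l → R) : ℕ :=
  Nat.card {j // v j ≠ 0}

noncomputable def f₁ : Rng (ZMod 2) 47 :=
  AdjoinRoot.mk _ (X ^ 23 + X ^ 22 + X ^ 21 + X ^ 20 + X ^ 18 + X ^ 17 + X ^ 16 +
    X ^ 14 + X ^ 13 + X ^ 11 + X ^ 10 + X ^ 9 + X ^ 5 + X ^ 4 + 1)

noncomputable def f₂ : Rng (ZMod 2) 47 :=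
  AdjoinRoot.mk _ ((X ^ 47 - 1) /ₘ (X + 1))

noncomputable def g : Rng (ZMod 2) 47 :=
  AdjoinRoot.mk _ (X ^ 20 + X ^ 19 + X ^ 13 + X ^ 12 + X ^ 11 + X ^ 9 + X ^ 7 +
    X ^ 4 + X ^ 3 + X ^ 2 + 1)

/-!
If a codeword `(c₁, c₁ * g + c₂)` has weight at most `26`, one of its halves has weight at most
`13`. Both halves lie in `(f₁)`, since `f₁` divides `f₂`, and each determines the other up to an
element of `(f₂)`, which is `0` or the all-one word: `g` is invertible modulo the check polynomial
`(X ^ 47 - 1) / f₁`. By the cycle lemma the light half has a rotation in which, for every `k`, the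
first `k` coordinates contain at most `13 * k / 47` ones. A word of `(f₁)` is `f₁ * q` with
`deg q < 24`, and its first `k` coordinates depend only on the first `k` coefficients of `q`, so
this density bound cuts the enumeration of all `q` down to a search tree that the kernel can
traverse.
-/
section CycleLemma

variable {R : Type*} {m : ℕ} [NeZero m]

theorem sum_range_natCast_zmod [AddCommMonoid R] (a : ZMod m → R) :
    ∑ i ∈ Finset.range m, a i = ∑ i, a i :=
  Finset.sum_nbij' (fun i ↦ (i : ZMod m)) ZMod.val (fun _ _ ↦ Finset.mem_univ _)
    (fun i _ ↦ Finset.mem_range.mpr (ZMod.val_lt i))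
    (fun _ hi ↦ ZMod.val_cast_of_lt (Finset.mem_range.mp hi))
    (fun i _ ↦ ZMod.natCast_zmod_val i) (fun _ _ ↦ rfl)

theorem periodic_sum_range_of_sum_eq_zero [AddCommMonoid R] {b : ZMod m → R}
    (hb : ∑ i, b i = 0) : Function.Periodic (fun k : ℕ ↦ ∑ i ∈ Finset.range k, b i) m := by
  intro k
  have hshift : ∑ i ∈ Finset.range m, b ((k + i : ℕ) : ZMod m) = 0 := by
    simp only [Nat.cast_add]
    rw [sum_range_natCast_zmod fun i ↦ b ((k : ZMod m) + i), ← hb]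
    exact Equiv.sum_comp (Equiv.addLeft (k : ZMod m)) b
  simp only [Finset.sum_range_add, hshift, add_zero]

/-- The starting point is a maximum of the partial sums of the mean-zero sequence `m * a - ∑ a`,
which are periodic. -/
theorem exists_forall_mul_sum_range_le [CommRing R] [LinearOrder R] [IsStrictOrderedRing R]
    (a : ZMod m → R) :
    ∃ s : ZMod m, ∀ k : ℕ, m * ∑ i ∈ Finset.range k, a (s + i) ≤ k * ∑ i, a i := by
  set b : ZMod m → R := fun i ↦ m * a i - ∑ j, a j with hb
  have hb_sum : ∑ i, b i = 0 := by
    simp [hb, Finset.sum_sub_distrib, ← Finset.mul_sum, ZMod.card]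
  have hper := periodic_sum_range_of_sum_eq_zero hb_sum
  obtain ⟨N, -, hN⟩ := Finset.exists_max_image (Finset.range m)
    (fun k ↦ ∑ i ∈ Finset.range k, b i) ⟨0, Finset.mem_range.mpr (Nat.pos_of_neZero m)⟩
  refine ⟨N, fun k ↦ sub_nonpos.mp ?_⟩
  calc m * ∑ i ∈ Finset.range k, a (N + i) - k * ∑ i, a i
      = ∑ i ∈ Finset.range k, b ((N + i : ℕ) : ZMod m) := by
        simp [hb, Finset.sum_sub_distrib, Finset.mul_sum]
    _ = ∑ i ∈ Finset.range (N + k), b i - ∑ i ∈ Finset.range N, b i := by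
        rw [Finset.sum_range_add, add_sub_cancel_left]
    _ ≤ 0 := by
        rw [sub_nonpos, ← hper.map_mod_nat (N + k)]
        exact hN _ (Finset.mem_range.mpr (Nat.mod_lt _ (Nat.pos_of_neZero m)))

end CycleLemma

namespace Rng

variable {F : Type*} [Field F] {m : ℕ} [NeZero m]

/-- The representative of degree `< m` of an element of `F[x]/(x^m - 1)`. -/
noncomputable def rep (r : Rng F m) : F[X] :=
  AdjoinRoot.modByMonicHom (monicXm (NeZero.ne m)) r

/-- The coordinates of an element of `F[x]/(x^m - 1)`, indexed cyclically. -/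
noncomputable def coord (r : Rng F m) (i : ZMod m) : F :=
  (rep r).coeff i.val

theorem degree_X_pow_sub_one : (X ^ m - 1 : F[X]).degree = m := by
  simpa using degree_X_pow_sub_C (Nat.pos_of_neZero m) (1 : F)

theorem X_pow_sub_one_ne_zero : (X ^ m - 1 : F[X]) ≠ 0 :=
  (monicXm (NeZero.ne m)).ne_zero

theorem mk_rep (r : Rng F m) : AdjoinRoot.mk (X ^ m - 1) (rep r) = r :=
  AdjoinRoot.mk_leftInverse (monicXm (NeZero.ne m)) r

theorem rep_mk {p : F[X]} (hp : p.degree < m) :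
    rep (AdjoinRoot.mk (X ^ m - 1 : F[X]) p) = p := by
  rw [rep, AdjoinRoot.modByMonicHom_mk, modByMonic_eq_self_iff (monicXm (NeZero.ne m)),
    degree_X_pow_sub_one]
  exact hp

theorem degree_rep_lt (r : Rng F m) : (rep r).degree < m := by
  obtain ⟨p, rfl⟩ := AdjoinRoot.mk_surjective r
  rw [rep, AdjoinRoot.modByMonicHom_mk, ← degree_X_pow_sub_one (F := F) (m := m)]
  exact degree_modByMonic_lt p (monicXm (NeZero.ne m))

theorem wt_eq_card_coord_ne_zero [DecidableEq F] (r : Rng F m) :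
    wt (NeZero.ne m) r = Finset.card {i : ZMod m | coord r i ≠ 0} := by
  symm
  refine Finset.card_bij (fun i _ ↦ i.val) (fun i hi ↦ ?_)
    (fun i _ j _ h ↦ ZMod.val_injective m h) (fun k hk ↦ ?_)
  · exact mem_support_iff.mpr (Finset.mem_filter.mp hi).2
  · have hk' : (rep r).coeff k ≠ 0 := mem_support_iff.mp hk
    have hlt : k < m := by
      exact_mod_cast (le_degree_of_ne_zero hk').trans_lt (degree_rep_lt r)
    exact ⟨k, Finset.mem_filter.mpr
      ⟨Finset.mem_univ _, by rwa [coord, ZMod.val_cast_of_lt hlt]⟩, ZMod.val_cast_of_lt hlt⟩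

theorem rep_root_mul (r : Rng F m) : rep (AdjoinRoot.root _ * r) =
    X * rep r - C ((rep r).coeff (m - 1)) * (X ^ m - 1) := by
  set q : F[X] := X * rep r - C ((rep r).coeff (m - 1)) * (X ^ m - 1) with hq
  have hmk : AdjoinRoot.mk (X ^ m - 1 : F[X]) q = AdjoinRoot.root _ * r := by
    rw [hq, map_sub, map_mul, map_mul, AdjoinRoot.mk_self, mul_zero, sub_zero, mk_rep,
      AdjoinRoot.mk_X]
  have hdeg : q.degree < m := by
    rw [degree_lt_iff_coeff_zero]
    rintro (_ | k) hk
    · exact absurd (Nat.le_zero.mp hk) (NeZero.ne m)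
    by_cases h : k + 1 = m
    · simp [hq, ← h, coeff_one]
    · have hcoeff : (rep r).coeff k = 0 :=
        coeff_eq_zero_of_degree_lt ((degree_rep_lt r).trans_le (by norm_cast; omega))
      simp [hq, coeff_X_pow, coeff_one, h, hcoeff]
  rw [← hmk, rep_mk hdeg]

theorem coord_root_mul (r : Rng F m) (i : ZMod m) :
    coord (AdjoinRoot.root _ * r) i = coord r (i - 1) := by
  have hm : 0 < m := Nat.pos_of_neZero m
  rw [coord, coord, rep_root_mul]
  by_cases hi : i = 0
  · obtain ⟨n, rfl⟩ := Nat.exists_eq_succ_of_ne_zero hm.ne'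
    rw [hi, ZMod.val_zero, zero_sub, ZMod.val_neg_one]
    simp [coeff_X_pow]
  · have hpos : 0 < i.val := Nat.pos_of_ne_zero ((ZMod.val_ne_zero i).mpr hi)
    have hlt : i.val < m := ZMod.val_lt i
    have : Fact (1 < m) := ⟨by omega⟩
    have hval : (i - 1).val + 1 = i.val := by
      rw [ZMod.val_sub (by rw [ZMod.val_one]; omega), ZMod.val_one]
      omega
    have hne : (i - 1).val + 1 ≠ m := by omega
    simp [← hval, coeff_X_pow, coeff_one, hne]

theorem coord_root_pow_mul (s : ℕ) (r : Rng F m) (i : ZMod m) :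
    coord (AdjoinRoot.root _ ^ s * r) i = coord r (i - s) := by
  induction s generalizing i with
  | zero => simp
  | succ s ih =>
    rw [pow_succ', mul_assoc, coord_root_mul, ih]
    congr 1
    push_cast
    ring

theorem wt_root_pow_mul (s : ℕ) (r : Rng F m) :
    wt (NeZero.ne m) (AdjoinRoot.root _ ^ s * r) = wt (NeZero.ne m) r := by
  classical
  rw [wt_eq_card_coord_ne_zero, wt_eq_card_coord_ne_zero]
  refine Finset.card_equiv (Equiv.subRight (s : ZMod m)) fun i ↦ ?_
  simp [coord_root_pow_mul]

theorem root_pow_mul_eq_zero_iff (s : ℕ) (r : Rng F m) :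
    AdjoinRoot.root (X ^ m - 1 : F[X]) ^ s * r = 0 ↔ r = 0 := by
  have hroot : AdjoinRoot.root (X ^ m - 1 : F[X]) ^ m = 1 := by
    have h := AdjoinRoot.eval₂_root (X ^ m - 1 : F[X])
    rwa [eval₂_sub, eval₂_X_pow, eval₂_one, sub_eq_zero] at h
  exact ((IsUnit.of_pow_eq_one hroot (NeZero.ne m)).pow s).mul_right_eq_zero

theorem exists_rep_eq_mul_of_mem_span {f h : F[X]} (hfh : f * h = X ^ m - 1) {c : Rng F m}
    (hc : c ∈ Ideal.span {AdjoinRoot.mk (X ^ m - 1) f}) :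
    ∃ p : F[X], p.degree < h.degree ∧ rep c = f * p := by
  obtain ⟨a, rfl⟩ := Ideal.mem_span_singleton'.mp hc
  obtain ⟨P, rfl⟩ := AdjoinRoot.mk_surjective a
  have hne : f * h ≠ 0 := hfh ▸ X_pow_sub_one_ne_zero
  have hmod : (P % h).degree < h.degree := EuclideanDomain.mod_lt P (right_ne_zero_of_mul hne)
  have hdeg : (f * (P % h)).degree < m := by
    rw [← degree_X_pow_sub_one (F := F), ← hfh, degree_mul, degree_mul]
    exact WithBot.add_lt_add_left (degree_ne_bot.mpr (left_ne_zero_of_mul hne)) hmod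
  refine ⟨P % h, hmod, ?_⟩
  rw [← rep_mk hdeg, ← map_mul]
  refine congrArg rep (AdjoinRoot.mk_eq_mk.mpr ?_)
  rw [← hfh]
  exact ⟨P / h, by linear_combination -f * EuclideanDomain.div_add_mod P h⟩

theorem finrank_span_mk {f h : F[X]} (hfh : f * h = X ^ m - 1) :
    Module.finrank F ((Ideal.span {AdjoinRoot.mk (X ^ m - 1 : F[X]) f}).restrictScalars F) =
      h.natDegree := by
  have hne : f * h ≠ 0 := hfh ▸ X_pow_sub_one_ne_zero
  have hf : f ≠ 0 := left_ne_zero_of_mul hne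
  have hh : h ≠ 0 := right_ne_zero_of_mul hne
  let φ : degreeLT F h.natDegree →ₗ[F] Rng F m :=
    (AdjoinRoot.mkₐ (X ^ m - 1)).toLinearMap ∘ₗ LinearMap.mulLeft F f ∘ₗ Submodule.subtype _
  have hdeg (p : F[X]) : p ∈ degreeLT F h.natDegree ↔ p.degree < h.degree := by
    rw [mem_degreeLT, degree_eq_natDegree hh]
  have hφ : Function.Injective φ := by
    rw [← LinearMap.ker_eq_bot, LinearMap.ker_eq_bot']
    rintro ⟨p, hp⟩ h0
    have hdvd : f * h ∣ f * p := hfh ▸ AdjoinRoot.mk_eq_zero.mp h0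
    exact Subtype.ext <| eq_zero_of_dvd_of_degree_lt ((mul_dvd_mul_iff_left hf).mp hdvd)
      ((hdeg p).mp hp)
  have hrange : LinearMap.range φ =
      (Ideal.span {AdjoinRoot.mk (X ^ m - 1 : F[X]) f}).restrictScalars F := by
    ext c
    constructor
    · rintro ⟨p, rfl⟩
      exact Ideal.mem_span_singleton.mpr ⟨AdjoinRoot.mk _ p, map_mul (AdjoinRoot.mk _) f p⟩
    · intro hc
      obtain ⟨p, hp, hcp⟩ := exists_rep_eq_mul_of_mem_span hfh hc
      exact ⟨⟨p, (hdeg p).mpr hp⟩, (congrArg (AdjoinRoot.mk _) hcp.symm).trans (mk_rep c)⟩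
  rw [← hrange, LinearMap.finrank_range_of_inj hφ, (degreeLTEquiv F h.natDegree).finrank_eq,
    Module.finrank_fin_fun]

/-- The number of nonzero coefficients of `p` in degrees `< k`. -/
noncomputable def prefixWeight (p : F[X]) (k : ℕ) : ℕ :=
  Nat.count (· ∈ p.support) k

theorem wt_mk {p : F[X]} (hp : p.degree < m) {k : ℕ} (hk : m ≤ k) :
    wt (NeZero.ne m) (AdjoinRoot.mk (X ^ m - 1 : F[X]) p) = prefixWeight p k := by
  change (rep (AdjoinRoot.mk _ p)).support.card = _
  rw [rep_mk hp, prefixWeight, Nat.count_eq_card_filter_range, Finset.filter_mem_eq_inter,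
    Finset.inter_eq_right.mpr]
  intro i hi
  have him : i < m := by
    exact_mod_cast (le_degree_of_ne_zero (mem_support_iff.mp hi)).trans_lt hp
  exact Finset.mem_range.mpr (him.trans_le hk)

theorem prefixWeight_rep [DecidableEq F] (r : Rng F m) {k : ℕ} (hk : k ≤ m) :
    prefixWeight (rep r) k = ∑ i ∈ Finset.range k, if coord r i ≠ 0 then 1 else 0 := by
  rw [prefixWeight, Nat.count_eq_card_filter_range, Finset.card_filter]
  refine Finset.sum_congr rfl fun i hi ↦ ?_
  simp only [coord, ZMod.val_cast_of_lt ((Finset.mem_range.mp hi).trans_le hk), mem_support_iff]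

theorem exists_root_pow_mul_prefixWeight_le (r : Rng F m) :
    ∃ s : ℕ, ∀ k ≤ m, m * prefixWeight (rep (AdjoinRoot.root _ ^ s * r)) k ≤
      wt (NeZero.ne m) r * k := by
  classical
  obtain ⟨s, hs⟩ :=
    exists_forall_mul_sum_range_le fun i : ZMod m ↦ if coord r i ≠ 0 then (1 : ℤ) else 0
  refine ⟨(-s).val, fun k hk ↦ ?_⟩
  rw [prefixWeight_rep _ hk, wt_eq_card_coord_ne_zero, Finset.card_filter, mul_comm _ k]
  zify
  simpa [coord_root_pow_mul, add_comm] using hs k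

end Rng

section BinaryWords

/-- The bit of `n` in position `k`, as a number. It is written with raw operations on `ℕ`, which the
kernel evaluates on literals without unfolding instances. -/
def bitAt (n k : ℕ) : ℕ :=
  Nat.mod (Nat.shiftRight n k) 2

/-- The number of ones among the last four bits of `n`, read off a table whose `i`-th decimal
digit is the number of ones in `i`. -/
def nibbleWeight (n : ℕ) : ℕ :=
  Nat.mod (Nat.div 4332322132212110 (Nat.pow 10 (Nat.mod n 16))) 10

/-- The number of ones among the last `4 * k` bits of `n`. -/
def popcount (k n : ℕ) : ℕ :=
  Nat.rec 0 (fun i c ↦ Nat.add c (nibbleWeight (Nat.shiftRight n (Nat.mul 4 i)))) k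

/-- The polynomial over `𝔽₂` whose coefficients are the binary digits of `n`. -/
noncomputable def binPoly (n : ℕ) : (ZMod 2)[X] :=
  ∑ i ∈ Finset.range n.size, if n.testBit i then X ^ i else 0

/-- The sum of the monomials `X ^ j`, for `j` in the list `L`. -/
noncomputable def monomialSum (L : List ℕ) : (ZMod 2)[X] :=
  (L.map (X ^ ·)).sum

/-- The element of `𝔽₂[x]/(x^m - 1)` whose coefficients are the binary digits of `n`. -/
noncomputable def Rng.ofWord (m n : ℕ) : Rng (ZMod 2) m :=
  AdjoinRoot.mk _ (binPoly n)

/-- The element of `𝔽₂[x]/(x^m - 1)` that is the sum of the powers `x ^ j`, for `j` in `L`. -/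
noncomputable def Rng.ofExponents (m : ℕ) (L : List ℕ) : Rng (ZMod 2) m :=
  AdjoinRoot.mk _ (monomialSum L)

/-- The word of the product of the polynomial of the word `a` and `monomialSum L`. -/
def mulExponents (a : ℕ) (L : List ℕ) : ℕ :=
  L.foldr (fun j r ↦ (a <<< j) ^^^ r) 0

/-- The word obtained from `n` by reducing exponents modulo `m`, for `n < 2 ^ (2 * m)`. -/
def cyclicFold (m n : ℕ) : ℕ :=
  (n % (1 <<< m)) ^^^ (n >>> m)

theorem bitAt_eq_ite (n k : ℕ) : bitAt n k = if n.testBit k then 1 else 0 := by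
  change n >>> k % 2 = _
  rw [Nat.testBit_eq_decide_div_mod_eq, Nat.shiftRight_eq_div_pow]
  rcases Nat.mod_two_eq_zero_or_one (n / 2 ^ k) with h | h <;> simp [h]

theorem coeff_binPoly (n k : ℕ) : (binPoly n).coeff k = if n.testBit k then 1 else 0 := by
  have hsize : n.testBit k → k < n.size := fun h ↦
    Nat.lt_size.mpr (Nat.ge_two_pow_of_testBit h)
  have hcoeff (i : ℕ) : (if n.testBit i then X ^ i else 0 : (ZMod 2)[X]).coeff k =
      if k = i then if n.testBit k then 1 else 0 else 0 := by
    split_ifs <;> simp_all [coeff_X_pow]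
  rw [binPoly, finsetSum_coeff]
  simp only [hcoeff, Finset.sum_ite_eq, Finset.mem_range]
  split_ifs <;> simp_all

theorem mem_support_binPoly {n k : ℕ} : k ∈ (binPoly n).support ↔ n.testBit k := by
  simp [coeff_binPoly]

theorem nibbleWeight_eq (n : ℕ) :
    nibbleWeight n = bitAt n 0 + bitAt n 1 + bitAt n 2 + bitAt n 3 := by
  have htable : ∀ x < 2 ^ 4, nibbleWeight x = bitAt x 0 + bitAt x 1 + bitAt x 2 + bitAt x 3 := by
    decide
  have hmod : nibbleWeight (n % 2 ^ 4) = nibbleWeight n := by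
    unfold nibbleWeight
    exact congrArg (fun x ↦ Nat.mod (Nat.div _ (Nat.pow 10 x)) 10) (Nat.mod_mod n 16)
  have hlow {i : ℕ} (hi : i < 4) : bitAt (n % 2 ^ 4) i = bitAt n i := by
    simp only [bitAt_eq_ite, Nat.testBit_mod_two_pow, hi, decide_true, Bool.true_and]
  rw [← hmod, htable _ (Nat.mod_lt n (by norm_num)), hlow (by norm_num), hlow (by norm_num),
    hlow (by norm_num), hlow (by norm_num)]

theorem prefixWeight_binPoly_succ (n k : ℕ) :
    Rng.prefixWeight (binPoly n) (k + 1) = Rng.prefixWeight (binPoly n) k + bitAt n k := by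
  rw [Rng.prefixWeight, Rng.prefixWeight, Nat.count_succ, bitAt_eq_ite]
  simp only [mem_support_binPoly]

theorem prefixWeight_binPoly (n k : ℕ) :
    Rng.prefixWeight (binPoly n) (4 * k) = popcount k n := by
  induction k with
  | zero => rfl
  | succ k ih =>
    have hbit (i : ℕ) : bitAt n (4 * k + i) = bitAt (n >>> (4 * k)) i :=
      congrArg (· % 2) (Nat.shiftRight_add n (4 * k) i)
    calc Rng.prefixWeight (binPoly n) (4 * k + 3 + 1)
        = popcount k n + nibbleWeight (n >>> (4 * k)) := by
          simp only [prefixWeight_binPoly_succ, ← Nat.add_assoc, nibbleWeight_eq, ← hbit, ih,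
            add_zero]
      _ = popcount (k + 1) n := rfl

theorem binPoly_zero : binPoly 0 = 0 := by
  simp [binPoly]

theorem binPoly_one : binPoly 1 = 1 := by
  simp [binPoly]

theorem binPoly_xor (a b : ℕ) : binPoly (a ^^^ b) = binPoly a + binPoly b := by
  ext k
  rw [coeff_add, coeff_binPoly, coeff_binPoly, coeff_binPoly, Nat.testBit_xor]
  cases a.testBit k <;> cases b.testBit k <;> decide

theorem binPoly_shiftLeft (a k : ℕ) : binPoly (a <<< k) = X ^ k * binPoly a := by
  ext i
  rw [coeff_X_pow_mul', coeff_binPoly, coeff_binPoly, Nat.testBit_shiftLeft]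
  by_cases h : k ≤ i <;> simp [h]

theorem degree_binPoly_lt_iff {n k : ℕ} : (binPoly n).degree < k ↔ n < 2 ^ k := by
  rw [degree_lt_iff_coeff_zero]
  constructor
  · intro h
    refine Nat.lt_pow_two_of_testBit n fun i hi ↦ ?_
    simpa [coeff_binPoly] using h i hi
  · intro h i hi
    rw [coeff_binPoly, Nat.testBit_lt_two_pow (h.trans_le (Nat.pow_le_pow_right two_pos hi))]
    rfl

theorem binPoly_mulExponents (a : ℕ) (L : List ℕ) :
    binPoly (mulExponents a L) = binPoly a * monomialSum L := by
  induction L with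
  | nil => simp [mulExponents, monomialSum, binPoly_zero]
  | cons j L ih =>
    change binPoly ((a <<< j) ^^^ mulExponents a L) = _
    rw [binPoly_xor, binPoly_shiftLeft, ih, monomialSum, monomialSum, List.map_cons,
      List.sum_cons]
    ring

theorem binPoly_mulExponents_one (L : List ℕ) : binPoly (mulExponents 1 L) = monomialSum L := by
  rw [binPoly_mulExponents, binPoly_one, one_mul]

theorem mulExponents_lt_two_pow {a k l : ℕ} {L : List ℕ} (ha : a < 2 ^ k)
    (hL : ∀ j ∈ L, j ≤ l) : mulExponents a L < 2 ^ (k + l) := by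
  induction L with
  | nil => exact Nat.two_pow_pos _
  | cons j L ih =>
    rw [List.forall_mem_cons] at hL
    refine Nat.xor_lt_two_pow ?_ (ih hL.2)
    rw [Nat.shiftLeft_eq, pow_add]
    exact Nat.mul_lt_mul_of_lt_of_le ha (Nat.pow_le_pow_right two_pos hL.1) (Nat.two_pow_pos _)

theorem cyclicFold_lt_two_pow {m n : ℕ} (hn : n < 2 ^ (m + m)) : cyclicFold m n < 2 ^ m := by
  refine Nat.xor_lt_two_pow ?_ ?_
  · rw [Nat.one_shiftLeft]
    exact Nat.mod_lt _ (Nat.two_pow_pos _)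
  · rw [Nat.shiftRight_eq_div_pow, Nat.div_lt_iff_lt_mul (Nat.two_pow_pos _), ← pow_add]
    exact hn

theorem ofWord_cyclicFold (m n : ℕ) : Rng.ofWord m (cyclicFold m n) = Rng.ofWord m n := by
  have hsplit : n = n % 2 ^ m ^^^ (n >>> m) <<< m := by
    refine Nat.eq_of_testBit_eq fun i ↦ ?_
    rw [Nat.testBit_xor, Nat.testBit_mod_two_pow, Nat.testBit_shiftLeft, Nat.testBit_shiftRight]
    by_cases h : i < m
    · simp [h, h.not_ge]
    · simp [h, Nat.add_sub_cancel' (not_lt.mp h), not_lt.mp h]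
  rw [Rng.ofWord, Rng.ofWord, AdjoinRoot.mk_eq_mk, cyclicFold, Nat.one_shiftLeft, binPoly_xor]
  nth_rw 3 [hsplit]
  rw [binPoly_xor, binPoly_shiftLeft]
  exact ⟨-binPoly (n >>> m), by ring⟩

theorem ofWord_xor (m a b : ℕ) : Rng.ofWord m (a ^^^ b) = Rng.ofWord m a + Rng.ofWord m b := by
  rw [Rng.ofWord, binPoly_xor, map_add, Rng.ofWord, Rng.ofWord]

theorem ofWord_mul_ofExponents (m n : ℕ) (L : List ℕ) :
    Rng.ofWord m n * Rng.ofExponents m L = Rng.ofWord m (cyclicFold m (mulExponents n L)) := by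
  rw [ofWord_cyclicFold, Rng.ofWord, Rng.ofExponents, Rng.ofWord, binPoly_mulExponents, map_mul]

theorem ofWord_mulExponents_one (m : ℕ) (L : List ℕ) :
    Rng.ofWord m (mulExponents 1 L) = Rng.ofExponents m L := by
  rw [Rng.ofWord, binPoly_mulExponents_one, Rng.ofExponents]

theorem wt_ofWord {m n k : ℕ} [NeZero m] (hn : n < 2 ^ m) (hk : m ≤ 4 * k) :
    wt (NeZero.ne m) (Rng.ofWord m n) = popcount k n := by
  rw [Rng.ofWord, Rng.wt_mk (degree_binPoly_lt_iff.mpr hn) hk, prefixWeight_binPoly]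

theorem monomialSum_mul_monomialSum {A B C : List ℕ}
    (h : mulExponents (mulExponents 1 A) B = mulExponents 1 C) :
    monomialSum A * monomialSum B = monomialSum C := by
  rw [← binPoly_mulExponents_one A, ← binPoly_mulExponents, h, binPoly_mulExponents_one]

end BinaryWords

section Search

/-- Depth-first search through the words of the polynomials `n + X ^ k * f * q`, where `q` has
degree `< r` and `c` is the number of ones among the last `k` bits: it decides the coefficients of
`q` in increasing order, drops a branch as soon as the last `j` bits contain more than `j * w / m`
ones, and tests `leaf` on the words that survive. -/
def search (m w f : ℕ) (leaf : ℕ → Bool) : ℕ → ℕ → ℕ → ℕ → Bool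
  | 0, _, _, n => leaf n
  | r + 1, k, c, n =>
    let step v := Nat.blt (w * (k + 1)) (m * (c + bitAt v k)) ||
      search m w f leaf r (k + 1) (c + bitAt v k) v
    step n && step (n ^^^ (f <<< k))

theorem search_succ {m w f : ℕ} {leaf : ℕ → Bool} {r k c n : ℕ}
    (h : search m w f leaf (r + 1) k c n = true) {v : ℕ} (hv : v = n ∨ v = n ^^^ (f <<< k))
    (hweight : m * (c + bitAt v k) ≤ w * (k + 1)) :
    search m w f leaf r (k + 1) (c + bitAt v k) v = true := by
  have hstep : (Nat.blt (w * (k + 1)) (m * (c + bitAt v k)) ||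
      search m w f leaf r (k + 1) (c + bitAt v k) v) = true := by
    obtain ⟨h₀, h₁⟩ := Bool.and_eq_true_iff.mp h
    rcases hv with rfl | rfl
    exacts [h₀, h₁]
  refine (Bool.or_eq_true_iff.mp hstep).resolve_left fun hlt ↦ ?_
  exact (Nat.blt_eq.mp hlt).not_ge hweight

theorem exists_leaf_of_search {m w f : ℕ} {leaf : ℕ → Bool} {V : (ZMod 2)[X]} {r k n : ℕ}
    {q : (ZMod 2)[X]} (hsearch : search m w f leaf r k (Rng.prefixWeight V k) n = true)
    (hq : q.degree < r) (hV : V = binPoly n + X ^ k * (binPoly f * q))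
    (hprefix : ∀ j ≤ k + r, m * Rng.prefixWeight V j ≤ w * j) :
    ∃ v, binPoly v = V ∧ leaf v = true := by
  induction r generalizing k n q with
  | zero =>
    have hq0 : q = 0 := degree_eq_bot.mp (Nat.WithBot.lt_zero_iff.mp hq)
    exact ⟨n, by rw [hV, hq0, mul_zero, mul_zero, add_zero], hsearch⟩
  | succ r ih =>
    obtain ⟨v, hv, hbin⟩ : ∃ v, (v = n ∨ v = n ^^^ (f <<< k)) ∧
        binPoly v = binPoly n + X ^ k * (binPoly f * C (q.coeff 0)) := by
      rcases (by decide : ∀ a : ZMod 2, a = 0 ∨ a = 1) (q.coeff 0) with h0 | h0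
      · exact ⟨n, Or.inl rfl, by simp [h0]⟩
      · exact ⟨_, Or.inr rfl, by simp [h0, binPoly_xor, binPoly_shiftLeft]⟩
    have hV' : V = binPoly v + X ^ (k + 1) * (binPoly f * q.divX) := by
      rw [hbin, hV]
      nth_rw 1 [← divX_mul_X_add q]
      ring
    have hcoeff : V.coeff k = (binPoly v).coeff k := by
      rw [hV', coeff_add, coeff_X_pow_mul', if_neg (by omega), add_zero]
    have hcount : Rng.prefixWeight V k + bitAt v k = Rng.prefixWeight V (k + 1) := by
      rw [Rng.prefixWeight, Rng.prefixWeight, Nat.count_succ, bitAt_eq_ite]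
      simp only [mem_support_iff, hcoeff, ← mem_support_binPoly]
    have hnext := search_succ hsearch hv (hcount ▸ hprefix (k + 1) (by omega))
    refine ih (hcount ▸ hnext) ?_ hV' fun j hj ↦ hprefix j (by omega)
    rw [degree_lt_iff_coeff_zero] at hq ⊢
    exact fun i hi ↦ by rw [coeff_divX]; exact hq (i + 1) (by omega)

end Search

section PairCode

variable {F R : Type*} [Field F] [CommRing R] [Algebra F R]

/-- The code of the pairs `(a, a * u + b)` with `a ∈ I` and `b ∈ J`. -/
def pairCode (I J : Submodule F R) (u : R) : Submodule F (R × R) :=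
  (LinearMap.range (I.subtype.prodMap J.subtype)).map
    ((LinearEquiv.refl F R).skewProd (LinearEquiv.refl F R) (LinearMap.mulRight F u)).toLinearMap

theorem coe_pairCode (I J : Submodule F R) (u : R) :
    (pairCode I J u : Set (R × R)) = {v | ∃ a ∈ I, ∃ b ∈ J, v = (a, a * u + b)} := by
  ext v
  simp [pairCode, eq_comm, add_comm, and_assoc]

theorem finrank_pairCode (I J : Submodule F R) [FiniteDimensional F I] [FiniteDimensional F J]
    (u : R) :
    Module.finrank F (pairCode I J u) = Module.finrank F I + Module.finrank F J := by
  rw [pairCode, LinearEquiv.finrank_map_eq, LinearMap.finrank_range_of_inj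
    (I.subtype_injective.prodMap J.subtype_injective), Module.finrank_prod]

end PairCode

section Code

/-- The exponents of the generator polynomial `f₁`. -/
def generatorExponents : List ℕ := [23, 22, 21, 20, 18, 17, 16, 14, 13, 11, 10, 9, 5, 4, 0]

/-- The exponents of the check polynomial `(X ^ 47 - 1) / f₁`. -/
def checkExponents : List ℕ := [24, 23, 20, 18, 15, 12, 11, 9, 8, 5, 4, 0]

/-- The exponents of `f₂ / f₁`. -/
def quotientExponents : List ℕ := [23, 19, 18, 14, 13, 12, 10, 9, 7, 6, 5, 3, 2, 1, 0]

/-- The exponents of the polynomial `g`. -/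
def gExponents : List ℕ := [20, 19, 13, 12, 11, 9, 7, 4, 3, 2, 0]

/-- The exponents of the inverse of `g` modulo the check polynomial. -/
def gInvExponents : List ℕ := [23, 22, 20, 18, 15, 13, 10, 9, 7, 6, 1]

theorem f₁_eq_ofExponents : f₁ = Rng.ofExponents 47 generatorExponents := by
  simp [f₁, Rng.ofExponents, monomialSum, generatorExponents, add_assoc]

theorem g_eq_ofExponents : g = Rng.ofExponents 47 gExponents := by
  simp [g, Rng.ofExponents, monomialSum, gExponents, add_assoc]

theorem X_pow_sub_one_eq_monomialSum : (X ^ 47 - 1 : (ZMod 2)[X]) = monomialSum [47, 0] := by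
  simp [monomialSum, CharTwo.sub_eq_add]

theorem generator_mul_check :
    monomialSum generatorExponents * monomialSum checkExponents = X ^ 47 - 1 := by
  rw [X_pow_sub_one_eq_monomialSum]
  exact monomialSum_mul_monomialSum (by decide)

theorem repunit_mul_X_add_one : monomialSum (List.range 47) * (X + 1) = X ^ 47 - 1 := by
  have hX : (X + 1 : (ZMod 2)[X]) = monomialSum [1, 0] := by
    simp [monomialSum]
  rw [hX, X_pow_sub_one_eq_monomialSum]
  exact monomialSum_mul_monomialSum (by decide +kernel)

theorem f₂_eq_ofExponents : f₂ = Rng.ofExponents 47 (List.range 47) := by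
  have hmonic : (X + 1 : (ZMod 2)[X]).Monic := monic_X_add_C 1
  rw [f₂, Rng.ofExponents]
  congr 1
  rw [← repunit_mul_X_add_one, mul_comm, mul_divByMonic_cancel_left _ hmonic]

theorem f₂_mem_span_f₁ : f₂ ∈ Ideal.span {f₁} := by
  have hmul : monomialSum generatorExponents * monomialSum quotientExponents =
      monomialSum (List.range 47) := monomialSum_mul_monomialSum (by decide +kernel)
  rw [f₂_eq_ofExponents, f₁_eq_ofExponents, Rng.ofExponents, Rng.ofExponents, ← hmul, map_mul]
  exact Ideal.mul_mem_right _ _ (Ideal.mem_span_singleton_self _)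

theorem natDegree_check : (monomialSum checkExponents).natDegree = 24 := by
  simp only [monomialSum, checkExponents, List.map_cons, List.map_nil, List.sum_cons,
    List.sum_nil]
  compute_degree!

theorem finrank_span_f₁ :
    Module.finrank (ZMod 2) ((Ideal.span {f₁}).restrictScalars (ZMod 2)) = 24 := by
  rw [f₁_eq_ofExponents, Rng.ofExponents, Rng.finrank_span_mk generator_mul_check,
    natDegree_check]

theorem finrank_span_f₂ :
    Module.finrank (ZMod 2) ((Ideal.span {f₂}).restrictScalars (ZMod 2)) = 1 := by
  rw [f₂_eq_ofExponents, Rng.ofExponents, Rng.finrank_span_mk repunit_mul_X_add_one]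
  exact natDegree_X_add_C 1

theorem mul_g_mul_gInv {c : Rng (ZMod 2) 47} (hc : c ∈ Ideal.span {f₁}) :
    c * g * Rng.ofExponents 47 gInvExponents = c := by
  have hf₁ : f₁ * g * Rng.ofExponents 47 gInvExponents = f₁ := by
    rw [f₁_eq_ofExponents, g_eq_ofExponents, ← ofWord_mulExponents_one 47 generatorExponents,
      ofWord_mul_ofExponents, ofWord_mul_ofExponents]
    exact congrArg (Rng.ofWord 47) (by decide +kernel)
  obtain ⟨a, rfl⟩ := Ideal.mem_span_singleton'.mp hc
  linear_combination a * hf₁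

theorem exists_ofWord_eq_of_mem_span_f₂ {e : Rng (ZMod 2) 47} (he : e ∈ Ideal.span {f₂}) :
    ∃ ε ∈ [0, 2 ^ 47 - 1], Rng.ofWord 47 ε = e := by
  rw [f₂_eq_ofExponents] at he
  obtain ⟨p, hp, hep⟩ := Rng.exists_rep_eq_mul_of_mem_span repunit_mul_X_add_one he
  have hp0 : p.degree ≤ 0 := by
    have hdeg : (X + 1 : (ZMod 2)[X]).degree = 1 := degree_X_add_C 1
    exact Nat.WithBot.lt_one_iff_le_zero.mp (hdeg ▸ hp)
  rw [← Rng.mk_rep e, hep, eq_C_of_degree_le_zero hp0]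
  rcases (by decide : ∀ a : ZMod 2, a = 0 ∨ a = 1) (p.coeff 0) with h0 | h0
  · exact ⟨0, by simp, by simp [h0, Rng.ofWord, binPoly_zero]⟩
  · refine ⟨2 ^ 47 - 1, by simp, ?_⟩
    rw [h0, C_1, mul_one, ← Rng.ofExponents, ← ofWord_mulExponents_one]
    exact congrArg (Rng.ofWord 47) (by decide +kernel)

/-- The test of the search on a word `n`: if `n` has at most `13` ones, then `n` and `n * u + e`
have together at least `27` ones for `u` equal to `g` or its inverse and `e` in the ideal `(f₂)`,
unless `n` and `e` both vanish. -/
def leafCheck (n : ℕ) : Bool :=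
  Nat.blt 13 (popcount 12 n) ||
    [gExponents, gInvExponents].all fun L ↦ [0, 2 ^ 47 - 1].all fun e ↦
      (n == 0 && e == 0) ||
        Nat.ble 27 (popcount 12 n + popcount 12 (cyclicFold 47 (mulExponents n L) ^^^ e))

theorem search_leafCheck :
    search 47 13 (mulExponents 1 generatorExponents) leafCheck 24 0 0 0 = true := by
  decide +kernel

theorem le_wt_add_wt_of_leafCheck {n ε : ℕ} {L : List ℕ} (hcheck : leafCheck n = true)
    (hn : n < 2 ^ 47) (hwt : wt (NeZero.ne 47) (Rng.ofWord 47 n) ≤ 13)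
    (hL : L ∈ [gExponents, gInvExponents]) (hε : ε ∈ [0, 2 ^ 47 - 1]) (hne : n ≠ 0 ∨ ε ≠ 0) :
    27 ≤ wt (NeZero.ne 47) (Rng.ofWord 47 n) +
      wt (NeZero.ne 47) (Rng.ofWord 47 n * Rng.ofExponents 47 L + Rng.ofWord 47 ε) := by
  have hL_le : ∀ j ∈ L, j ≤ 47 :=
    (by decide : ∀ L ∈ [gExponents, gInvExponents], ∀ j ∈ L, j ≤ 47) L hL
  have hε_lt : ε < 2 ^ 47 := (by decide : ∀ ε ∈ [0, 2 ^ 47 - 1], ε < 2 ^ 47) ε hε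
  have hlt : cyclicFold 47 (mulExponents n L) ^^^ ε < 2 ^ 47 :=
    Nat.xor_lt_two_pow (cyclicFold_lt_two_pow (mulExponents_lt_two_pow hn hL_le)) hε_lt
  have hpop := wt_ofWord (k := 12) hn (by norm_num)
  rw [ofWord_mul_ofExponents, ← ofWord_xor, wt_ofWord (k := 12) hlt (by norm_num), hpop]
  have hall := (Bool.or_eq_true_iff.mp hcheck).resolve_left fun h ↦
    (Nat.blt_eq.mp h).not_ge (hpop ▸ hwt)
  have hpair := List.all_eq_true.mp (List.all_eq_true.mp hall L hL) ε hε
  refine Nat.ble_eq.mp ((Bool.or_eq_true_iff.mp hpair).resolve_left fun h ↦ ?_)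
  simp only [Bool.and_eq_true, beq_iff_eq] at h
  exact hne.elim (· h.1) (· h.2)

theorem exists_leafCheck_of_mem_span_f₁ {c : Rng (ZMod 2) 47} (hc : c ∈ Ideal.span {f₁})
    (hwt : wt (NeZero.ne 47) c ≤ 13) :
    ∃ s n : ℕ, n < 2 ^ 47 ∧ Rng.ofWord 47 n = AdjoinRoot.root _ ^ s * c ∧
      leafCheck n = true := by
  obtain ⟨s, hs⟩ := Rng.exists_root_pow_mul_prefixWeight_le c
  set r := AdjoinRoot.root _ ^ s * c
  have hmem : r ∈ Ideal.span {f₁} := Ideal.mul_mem_left _ _ hc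
  rw [f₁_eq_ofExponents] at hmem
  obtain ⟨q, hq, hrq⟩ := Rng.exists_rep_eq_mul_of_mem_span generator_mul_check hmem
  have hq_deg : q.degree < (24 : ℕ) := natDegree_check ▸ hq.trans_le degree_le_natDegree
  have hrq' : Rng.rep r = binPoly 0 +
      X ^ 0 * (binPoly (mulExponents 1 generatorExponents) * q) := by
    rw [hrq, binPoly_mulExponents_one, binPoly_zero, pow_zero, zero_add, one_mul]
  have hprefix : ∀ j ≤ 0 + 24, 47 * Rng.prefixWeight (Rng.rep r) j ≤ 13 * j := fun j hj ↦
    (hs j (by omega)).trans (Nat.mul_le_mul_right j hwt)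
  have hzero : Rng.prefixWeight (Rng.rep r) 0 = 0 := Nat.count_zero _
  obtain ⟨n, hn, hcheck⟩ :=
    exists_leaf_of_search (hzero.symm ▸ search_leafCheck) hq_deg hrq' hprefix
  refine ⟨s, n, degree_binPoly_lt_iff.mp (hn ▸ Rng.degree_rep_lt r), ?_, hcheck⟩
  rw [Rng.ofWord, hn, Rng.mk_rep]

theorem le_wt_add_wt_of_wt_le {c e : Rng (ZMod 2) 47} {L : List ℕ} (hc : c ∈ Ideal.span {f₁})
    (he : e ∈ Ideal.span {f₂}) (hL : L ∈ [gExponents, gInvExponents])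
    (hwt : wt (NeZero.ne 47) c ≤ 13) (hne : c ≠ 0 ∨ e ≠ 0) :
    27 ≤ wt (NeZero.ne 47) c + wt (NeZero.ne 47) (c * Rng.ofExponents 47 L + e) := by
  obtain ⟨s, n, hn, hnc, hcheck⟩ := exists_leafCheck_of_mem_span_f₁ hc hwt
  obtain ⟨ε, hε, hεe⟩ :=
    exists_ofWord_eq_of_mem_span_f₂ (Ideal.mul_mem_left _ (AdjoinRoot.root _ ^ s) he)
  have hne' : n ≠ 0 ∨ ε ≠ 0 := by
    by_contra! h
    rw [h.1, Rng.ofWord, binPoly_zero, map_zero, eq_comm, Rng.root_pow_mul_eq_zero_iff] at hnc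
    rw [h.2, Rng.ofWord, binPoly_zero, map_zero, eq_comm, Rng.root_pow_mul_eq_zero_iff] at hεe
    exact hne.elim (· hnc) (· hεe)
  have hrot : AdjoinRoot.root _ ^ s * (c * Rng.ofExponents 47 L + e) =
      Rng.ofWord 47 n * Rng.ofExponents 47 L + Rng.ofWord 47 ε := by
    rw [hnc, hεe]
    ring
  rw [← Rng.wt_root_pow_mul s c, ← hnc] at hwt ⊢
  rw [← Rng.wt_root_pow_mul s (c * _ + e), hrot]
  exact le_wt_add_wt_of_leafCheck hcheck hn hwt hL hε hne'

theorem le_wt_add_wt {c₁ c₂ : Rng (ZMod 2) 47} (hc₁ : c₁ ∈ Ideal.span {f₁})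
    (hc₂ : c₂ ∈ Ideal.span {f₂}) (hne : c₁ ≠ 0 ∨ c₂ ≠ 0) :
    27 ≤ wt (NeZero.ne 47) c₁ + wt (NeZero.ne 47) (c₁ * g + c₂) := by
  by_cases hwt₁ : wt (NeZero.ne 47) c₁ ≤ 13
  · rw [g_eq_ofExponents]
    exact le_wt_add_wt_of_wt_le hc₁ hc₂ (by simp) hwt₁ hne
  by_cases hwt₂ : wt (NeZero.ne 47) (c₁ * g + c₂) ≤ 13
  · set h := Rng.ofExponents 47 gInvExponents with hh
    have hdouble : c₂ * h + c₂ * h = 0 := by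
      rw [← two_smul (ZMod 2), (CharTwo.two_eq_zero : (2 : ZMod 2) = 0), zero_smul]
    have hc₁_eq : (c₁ * g + c₂) * h + c₂ * h = c₁ := by
      linear_combination mul_g_mul_gInv hc₁ + hdouble
    have hd : c₁ * g + c₂ ∈ Ideal.span {f₁} :=
      add_mem (Ideal.mul_mem_right g _ hc₁)
        ((Ideal.span_singleton_le_iff_mem _).mpr f₂_mem_span_f₁ hc₂)
    have hne' : c₁ * g + c₂ ≠ 0 ∨ c₂ * h ≠ 0 := by
      by_contra! hzero
      have hc₁_zero : c₁ = 0 := by rw [← hc₁_eq, hzero.1, hzero.2, zero_mul, add_zero]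
      have hc₂_zero : c₂ = 0 := by simpa [hc₁_zero] using hzero.1
      exact hne.elim (· hc₁_zero) (· hc₂_zero)
    have hbound := le_wt_add_wt_of_wt_le (L := gInvExponents) hd
      (Ideal.mul_mem_right h _ hc₂) (by simp) hwt₂ hne'
    rwa [← hh, hc₁_eq, add_comm] at hbound
  · omega

end Code

/-- the code `𝒞₁ = {(c₁, c₁·g + c₂) : c₁ ∈ (f₁), c₂ ∈ (f₂)}` in
`R² ≅ 𝔽₂⁹⁴` (with `R = 𝔽₂[x]/(x⁴⁷-1)`) is an `𝔽₂`-linear code of length 94 and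
dimension 25, and every nonzero codeword has Hamming weight at least 27. -/
theorem stmt6 :
    ∃ W : Submodule (ZMod 2) (Rng (ZMod 2) 47 × Rng (ZMod 2) 47),
      (W : Set (Rng (ZMod 2) 47 × Rng (ZMod 2) 47)) =
        {v | ∃ c₁ ∈ Ideal.span {f₁}, ∃ c₂ ∈ Ideal.span {f₂}, v = (c₁, c₁ * g + c₂)} ∧
      Module.finrank (ZMod 2) W = 25 ∧
      ∀ c₁ ∈ Ideal.span {f₁}, ∀ c₂ ∈ Ideal.span {f₂},
        ((c₁, c₁ * g + c₂) : Rng (ZMod 2) 47 × Rng (ZMod 2) 47) ≠ 0 →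
        27 ≤ wt (by norm_num) c₁ + wt (by norm_num) (c₁ * g + c₂) := by
  let I := (Ideal.span {f₁}).restrictScalars (ZMod 2)
  let J := (Ideal.span {f₂}).restrictScalars (ZMod 2)
  have : FiniteDimensional (ZMod 2) (Rng (ZMod 2) 47) :=
    (monicXm (by norm_num)).finite_adjoinRoot
  refine ⟨pairCode I J g, coe_pairCode I J g, ?_, fun c₁ hc₁ c₂ hc₂ hne ↦ ?_⟩
  · rw [finrank_pairCode, finrank_span_f₁, finrank_span_f₂]
  · refine le_wt_add_wt hc₁ hc₂ ?_
    by_contra! h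
    exact hne (by simp [h.1, h.2])
end

section
/- There exists an 𝔽_2-linear subspace C of 𝔽_2^{94} of dimension 25 such that every nonzero element of C has Hamming weight at least 27. -/
/-!
Let `Q` be the binary quadratic residue code of length 47 and dimension 24, put
`f = 1 + x ^ 2 + x ^ 6 + x ^ 9`, and take the words `(u, f u + b 1)` with `u ∈ Q` and `b ∈ 𝔽₂`,
where `1` is the all-ones word. The polynomial `g = 1 + x ^ 8 + x ^ 12 + x ^ 14 + x ^ 40 + x ^ 44`
inverts `f` on `Q` up to multiples of `1`, so swapping the halves turns this code into the one
built in the same way from `g`.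

A word of weight at most 26 has a half of weight at most 13. By the swap it may be taken to be the
left half, and a suitable simultaneous cyclic shift of both halves leaves at most
`⌊24 * 13 / 47⌋ = 6` ones on the 24 information places of `Q`. Then the left half is a sum of at
most 6 rows of the systematic generator matrix, and all such words are weighed by computation.
-/

namespace QuasiCyclic

open scoped translate

section Translation

variable {G R : Type*} [AddCommGroup G] [CommRing R]

/-- A code with coordinates in an additive group is translation invariant if it contains all
translates of its words; for `G = Fin n` these are the cyclic codes of length `n`. -/
def TranslationInvariant (Q : Submodule R (G → R)) : Prop :=
  ∀ k, ∀ u ∈ Q, τ k u ∈ Q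

/-- Multiplication by the polynomial `∑ k ∈ s, x ^ k`, when a word `u` is read as the element
`∑ i, u i * x ^ i` of the group algebra of `G`. -/
def shiftSum (s : Finset G) : (G → R) →ₗ[R] G → R where
  toFun u i := ∑ k ∈ s, u (i - k)
  map_add' _ _ := funext fun _ => Finset.sum_add_distrib
  map_smul' _ _ := funext fun _ => (Finset.mul_sum ..).symm

theorem shiftSum_eq_sum_translate (s : Finset G) (u : G → R) :
    shiftSum s u = ∑ k ∈ s, τ k u := by
  ext i
  simp [shiftSum]

theorem shiftSum_translate (s : Finset G) (k : G) (u : G → R) :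
    shiftSum s (τ k u) = τ k (shiftSum s u) := by
  simp only [shiftSum_eq_sum_translate, translate_sum_right, translate_comm k]

theorem shiftSum_const (s : Finset G) (b : R) :
    shiftSum s (Function.const G b) = Function.const G (s.card • b) :=
  funext fun _ => Finset.sum_const b

theorem TranslationInvariant.shiftSum_mem {Q : Submodule R (G → R)}
    (hQ : TranslationInvariant Q) (s : Finset G) {u : G → R} (hu : u ∈ Q) :
    shiftSum s u ∈ Q := by
  rw [shiftSum_eq_sum_translate]
  exact Q.sum_mem fun k _ => hQ k u hu

/-- The translation invariant code generated by `γ`; for `G = Fin n` this is the cyclic code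
with generator polynomial `∑ i, γ i * x ^ i`. -/
def cyclicCode (γ : G → R) : Submodule R (G → R) :=
  Submodule.span R (Set.range fun k => τ k γ)

theorem cyclicCode_le {γ : G → R} {Q : Submodule R (G → R)} :
    cyclicCode γ ≤ Q ↔ ∀ k, τ k γ ∈ Q :=
  Submodule.span_le.trans Set.range_subset_iff

theorem translate_mem_cyclicCode (γ : G → R) (k : G) : τ k γ ∈ cyclicCode γ :=
  Submodule.subset_span ⟨k, rfl⟩

theorem self_mem_cyclicCode (γ : G → R) : γ ∈ cyclicCode γ := by
  simpa only [translate_zero] using translate_mem_cyclicCode γ 0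

theorem translationInvariant_cyclicCode (γ : G → R) : TranslationInvariant (cyclicCode γ) := by
  intro k
  have h : cyclicCode γ ≤ (cyclicCode γ).comap (LinearMap.funLeft R R (· - k)) :=
    cyclicCode_le.2 fun j => by
      rw [Submodule.mem_comap]
      change τ k (τ j γ) ∈ _
      rw [translate_translate]
      exact translate_mem_cyclicCode γ (k + j)
  exact fun u hu => h hu

theorem const_mem_cyclicCode [Fintype G] {γ : G → R} (hγ : IsUnit (∑ i, γ i)) (b : R) :
    Function.const G b ∈ cyclicCode γ := by
  have hsum : ∑ k, τ k γ = Function.const G (∑ i, γ i) := by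
    ext i
    simpa using Fintype.sum_equiv (Equiv.subLeft i) (fun k => γ (i - k)) γ fun _ => rfl
  have hb : Function.const G b = (b * ↑hγ.unit⁻¹) • ∑ k, τ k γ := by
    ext i
    simp [hsum, mul_assoc]
  rw [hb]
  exact Submodule.smul_mem _ _ (Submodule.sum_mem _ fun k _ => translate_mem_cyclicCode γ k)

theorem exists_const_of_mem_cyclicCode {γ : G → R} (φ : (G → R) →ₗ[R] G → R)
    (hφ : ∀ k u, φ (τ k u) = τ k (φ u)) {c : R} (hγ : φ γ = γ + Function.const G c)
    {u : G → R} (hu : u ∈ cyclicCode γ) : ∃ b, φ u = u + Function.const G b := by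
  induction hu using Submodule.span_induction with
  | mem u h =>
    obtain ⟨k, rfl⟩ := h
    exact ⟨c, by simp only [hφ, hγ]; rfl⟩
  | zero => exact ⟨0, by rw [map_zero, zero_add]; rfl⟩
  | add u w _ _ hu hw =>
    obtain ⟨a, ha⟩ := hu
    obtain ⟨b, hb⟩ := hw
    exact ⟨a + b, by rw [map_add, ha, hb, add_add_add_comm]; rfl⟩
  | smul r u _ hu =>
    obtain ⟨a, ha⟩ := hu
    exact ⟨r * a, by rw [map_smul, ha, smul_add]; rfl⟩

theorem translationInvariant_of_translate_one_mem {n : ℕ} [NeZero n] {Q : Submodule R (Fin n → R)}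
    (h : ∀ u ∈ Q, τ 1 u ∈ Q) : TranslationInvariant Q := by
  obtain ⟨m, rfl⟩ := Nat.exists_eq_succ_of_ne_zero (NeZero.ne n)
  intro k u hu
  induction k using Fin.induction with
  | zero => rwa [translate_zero]
  | succ k ih =>
    rw [← Fin.coeSucc_eq_succ, translate_add']
    exact h _ ih

theorem span_range_eq_cyclicCode {n k : ℕ} [NeZero n] {q : Fin (k + 1) → Fin n → R}
    {a : Fin (k + 1) → R} (hsucc : ∀ i : Fin k, τ 1 (q i.castSucc) = q i.succ + a i.castSucc • q 0)
    (hlast : τ 1 (q (Fin.last k)) = a (Fin.last k) • q 0) :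
    Submodule.span R (Set.range q) = cyclicCode (q 0) := by
  have hq : ∀ i, q i ∈ Submodule.span R (Set.range q) := fun i => Submodule.subset_span ⟨i, rfl⟩
  apply le_antisymm
  · refine Submodule.span_le.2 (Set.range_subset_iff.2 fun i => ?_)
    induction i using Fin.induction with
    | zero => exact self_mem_cyclicCode _
    | succ i ih =>
      rw [eq_sub_of_add_eq (hsucc i).symm]
      exact Submodule.sub_mem _ (translationInvariant_cyclicCode _ 1 _ ih)
        (Submodule.smul_mem _ _ (self_mem_cyclicCode _))
  · have hshift : Submodule.span R (Set.range q) ≤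
        (Submodule.span R (Set.range q)).comap (LinearMap.funLeft R R (· - 1)) := by
      refine Submodule.span_le.2 (Set.range_subset_iff.2 fun i => ?_)
      change τ 1 (q i) ∈ Submodule.span R (Set.range q)
      cases i using Fin.lastCases with
      | last => rw [hlast]; exact Submodule.smul_mem _ _ (hq 0)
      | cast i => rw [hsucc]; exact Submodule.add_mem _ (hq _) (Submodule.smul_mem _ _ (hq 0))
    exact cyclicCode_le.2 fun k =>
      translationInvariant_of_translate_one_mem (Q := Submodule.span R (Set.range q))
        (fun _ hu => hshift hu) k _ (hq 0)

end Translation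

section Systematic

variable {ι G R : Type*} [Fintype ι] [DecidableEq ι] [CommRing R]

/-- The words `q i` form a systematic generator matrix: the word `q i` restricts to the `i`-th
unit vector on the information places `pos`. -/
def IsSystematic (q : ι → G → R) (pos : ι → G) : Prop :=
  ∀ i j, q i (pos j) = if i = j then 1 else 0

variable {q : ι → G → R} {pos : ι → G}

theorem IsSystematic.sum_smul_apply (hq : IsSystematic q pos) (a : ι → R) (j : ι) :
    (∑ i, a i • q i) (pos j) = a j := by
  simp [hq _ j]

theorem IsSystematic.eq_sum (hq : IsSystematic q pos) {u : G → R}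
    (hu : u ∈ Submodule.span R (Set.range q)) : u = ∑ i, u (pos i) • q i := by
  obtain ⟨a, rfl⟩ := (Submodule.mem_span_range_iff_exists_fun R).1 hu
  simp only [hq.sum_smul_apply]

theorem IsSystematic.finrank_span [Nontrivial R] (hq : IsSystematic q pos) :
    Module.finrank R (Submodule.span R (Set.range q)) = Fintype.card ι :=
  finrank_span_eq_card <| Fintype.linearIndependent_iff.2 fun a ha j => by
    rw [← hq.sum_smul_apply a j, ha, Pi.zero_apply]

end Systematic

section Weight

theorem hammingNorm_eq_sum {ι M : Type*} [Fintype ι] [Zero M] [DecidableEq M] (v : ι → M) :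
    hammingNorm v = ∑ i, if v i ≠ 0 then 1 else 0 :=
  Finset.card_filter ..

theorem hammingNorm_append {m n : ℕ} {M : Type*} [Zero M] [DecidableEq M] (u : Fin m → M)
    (w : Fin n → M) : hammingNorm (Fin.append u w) = hammingNorm u + hammingNorm w := by
  simp only [hammingNorm_eq_sum, Fin.sum_univ_add, Fin.append_left, Fin.append_right]

variable {G M : Type*} [AddCommGroup G] [Fintype G] [Zero M] [DecidableEq M]

theorem hammingNorm_translate (k : G) (u : G → M) : hammingNorm (τ k u) = hammingNorm u := by
  simp only [hammingNorm_eq_sum]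
  exact sum_translate k fun i => if u i ≠ 0 then 1 else 0

theorem sum_hammingNorm_translate_comp {ι : Type*} [Fintype ι] (u : G → M) (pos : ι → G) :
    ∑ k, hammingNorm (τ k u ∘ pos) = Fintype.card ι * hammingNorm u := by
  have hcoord (i : ι) : (∑ k, if u (pos i - k) ≠ 0 then 1 else 0) = hammingNorm u := by
    rw [hammingNorm_eq_sum]
    exact Fintype.sum_equiv (Equiv.subLeft (pos i)) _ _ fun _ => rfl
  calc ∑ k, hammingNorm (τ k u ∘ pos)
      = ∑ i, ∑ k, if u (pos i - k) ≠ 0 then 1 else 0 := by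
        simp only [hammingNorm_eq_sum, Function.comp_apply, translate_apply]
        exact Finset.sum_comm
    _ = Fintype.card ι * hammingNorm u := by
        simp only [hcoord, Finset.sum_const, Finset.card_univ, smul_eq_mul]

theorem exists_hammingNorm_translate_comp_le {ι : Type*} [Fintype ι] (u : G → M) (pos : ι → G) :
    ∃ k, Fintype.card G * hammingNorm (τ k u ∘ pos) ≤ Fintype.card ι * hammingNorm u := by
  obtain ⟨k, -, hk⟩ := Finset.exists_le_of_sum_le (s := Finset.univ)
    (f := fun k => Fintype.card G * hammingNorm (τ k u ∘ pos))
    (g := fun _ => Fintype.card ι * hammingNorm u) Finset.univ_nonempty (by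
      rw [← Finset.mul_sum, sum_hammingNorm_translate_comp, Finset.sum_const, Finset.card_univ,
        smul_eq_mul])
  exact ⟨k, hk⟩

end Weight

section Double

variable {n : ℕ} [NeZero n] {R : Type*} [CommRing R]

/-- The word `(u, f u + b 1)` of length `2n`, where `f = ∑ k ∈ s, x ^ k` acts by `shiftSum s` and
`1` is the all-ones word. -/
def encode (s : Finset (Fin n)) : (Fin n → R) × R →ₗ[R] Fin (n + n) → R where
  toFun p := Fin.append p.1 (shiftSum s p.1 + Function.const _ p.2)
  map_add' p p' := by
    ext i
    cases i using Fin.addCases <;>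
      simp [Fin.append_left, Fin.append_right, add_add_add_comm, -Fin.natAdd_eq_addNat]
  map_smul' r p := by
    ext i
    cases i using Fin.addCases <;>
      simp [Fin.append_left, Fin.append_right, mul_add, -Fin.natAdd_eq_addNat]

/-- The quasi-cyclic code of all words `(u, f u + b 1)` with `u ∈ Q`; see `encode`. -/
def doubleCode (Q : Submodule R (Fin n → R)) (s : Finset (Fin n)) :
    Submodule R (Fin (n + n) → R) :=
  LinearMap.range (encode s ∘ₗ Q.subtype.prodMap LinearMap.id)

theorem mem_doubleCode {Q : Submodule R (Fin n → R)} {s : Finset (Fin n)} {v : Fin (n + n) → R} :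
    v ∈ doubleCode Q s ↔ ∃ u ∈ Q, ∃ b, encode s (u, b) = v := by
  simp [doubleCode]

theorem encode_injective (s : Finset (Fin n)) :
    Function.Injective (encode (R := R) s) := by
  rintro ⟨u, b⟩ ⟨u', b'⟩ h
  obtain ⟨rfl, hb⟩ := Prod.mk.inj ((Fin.appendEquiv n n).injective h)
  exact Prod.ext rfl (congrFun (add_left_cancel hb) 0)

theorem finrank_doubleCode {K : Type*} [Field K] (Q : Submodule K (Fin n → K))
    (s : Finset (Fin n)) : Module.finrank K (doubleCode Q s) = Module.finrank K Q + 1 := by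
  have hinj : Function.Injective (encode s ∘ₗ Q.subtype.prodMap LinearMap.id) :=
    (encode_injective s).comp (Q.injective_subtype.prodMap Function.injective_id)
  rw [doubleCode, LinearMap.finrank_range_of_inj hinj, Module.finrank_prod, Module.finrank_self]

theorem exists_encode_swap {γ : Fin n → R} (hγ : IsUnit (∑ i, γ i)) {s t : Finset (Fin n)} {c : R}
    (hst : shiftSum t (shiftSum s γ) = γ + Function.const _ c) {u : Fin n → R}
    (hu : u ∈ cyclicCode γ) (b : R) :
    ∃ w ∈ cyclicCode γ, ∃ b', shiftSum s u + Function.const _ b = w ∧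
      shiftSum t w + Function.const _ b' = u := by
  obtain ⟨a, ha⟩ := exists_const_of_mem_cyclicCode (shiftSum t ∘ₗ shiftSum s)
    (fun k u => by simp only [LinearMap.comp_apply, shiftSum_translate]) hst hu
  refine ⟨_, Submodule.add_mem _ ((translationInvariant_cyclicCode γ).shiftSum_mem s hu)
    (const_mem_cyclicCode hγ b), -(a + t.card • b), rfl, ?_⟩
  rw [LinearMap.comp_apply] at ha
  rw [map_add, ha, shiftSum_const]
  ext i
  simp

variable [DecidableEq R]

theorem hammingNorm_encode (s : Finset (Fin n)) (u : Fin n → R) (b : R) :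
    hammingNorm (encode s (u, b)) =
      hammingNorm u + hammingNorm (shiftSum s u + Function.const _ b) :=
  hammingNorm_append ..

theorem hammingNorm_encode_translate (s : Finset (Fin n)) (k : Fin n) (u : Fin n → R) (b : R) :
    hammingNorm (encode s (τ k u, b)) = hammingNorm (encode s (u, b)) := by
  rw [hammingNorm_encode, hammingNorm_encode, shiftSum_translate, hammingNorm_translate,
    ← hammingNorm_translate k (shiftSum s u + _)]
  rfl

end Double

section Packing

variable {n : ℕ}

/-- A binary word as a natural number with base-128 digits in `{0, 1}`. Then addition of words
is `^^^`, and, as `128 ≡ 1 [MOD 127]`, the residue modulo 127 is the weight: both are single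
arithmetic operations for the kernel. -/
def packed (v : Fin n → ZMod 2) : ℕ :=
  Nat.ofDigits 128 (List.ofFn fun i => (v i).val)

theorem packed_zero : packed (0 : Fin n → ZMod 2) = 0 := by
  induction n with
  | zero => rfl
  | succ n ih =>
    rw [packed, List.ofFn_succ, Nat.ofDigits_cons]
    exact congrArg (0 + 128 * ·) ih

theorem two_pow_mul_add_xor {k a b : ℕ} (ha : a < 2 ^ k) (hb : b < 2 ^ k) (x y : ℕ) :
    (2 ^ k * x + a) ^^^ (2 ^ k * y + b) = 2 ^ k * (x ^^^ y) + (a ^^^ b) := by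
  refine Nat.eq_of_testBit_eq fun j => ?_
  simp only [Nat.testBit_xor, Nat.testBit_two_pow_mul_add _ ha, Nat.testBit_two_pow_mul_add _ hb,
    Nat.testBit_two_pow_mul_add _ (Nat.xor_lt_two_pow ha hb)]
  split <;> rfl

theorem packed_add (v w : Fin n → ZMod 2) : packed (v + w) = packed v ^^^ packed w := by
  induction n with
  | zero => simp [packed]
  | succ n ih =>
    have hval : ∀ a b : ZMod 2, (a + b).val = a.val ^^^ b.val := by decide
    have hlt (a : ZMod 2) : a.val < 2 ^ 7 := (ZMod.val_lt a).trans (by norm_num)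
    have hsplit := two_pow_mul_add_xor (hlt (v 0)) (hlt (w 0)) (packed (v ∘ Fin.succ))
      (packed (w ∘ Fin.succ))
    rw [← hval, ← ih] at hsplit
    simpa [packed, List.ofFn_succ, Nat.ofDigits_cons, add_comm] using hsplit.symm

theorem packed_mod (hn : n < 127) (v : Fin n → ZMod 2) : packed v % 127 = hammingNorm v := by
  have hval : ∀ a : ZMod 2, a.val = if a ≠ 0 then 1 else 0 := by decide
  have hsum : packed v ≡ hammingNorm v [MOD 127] := by
    simpa only [packed, Nat.ofDigits_one, List.sum_ofFn, hval, ← hammingNorm_eq_sum] using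
      Nat.ofDigits_modEq' 128 1 127 rfl (List.ofFn fun i => (v i).val)
  refine Eq.trans hsum (Nat.mod_eq_of_lt (lt_of_le_of_lt ?_ hn))
  simpa only [Fintype.card_fin] using hammingNorm_le_card_fintype (x := v)

theorem eq_zero_of_packed_eq_zero (hn : n < 127) {v : Fin n → ZMod 2} (hv : packed v = 0) :
    v = 0 := by
  rw [← hammingNorm_eq_zero, ← packed_mod hn, hv]

theorem packed_add_list_sum (v : Fin n → ZMod 2) (l : List (Fin n → ZMod 2)) :
    packed (v + l.sum) = (l.map packed).foldl (· ^^^ ·) (packed v) := by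
  induction l generalizing v with
  | nil => simp
  | cons w l ih => rw [List.sum_cons, ← add_assoc, ih, packed_add, List.map_cons, List.foldl_cons]

end Packing

section Enumeration

/-- Whether `p` holds for `a` xor-ed with any at most `t` members of `l`. Written with recursors,
which the kernel evaluates faster than compiled pattern matching. -/
def allLightXors (p : ℕ → Bool) (l : List ℕ) : ℕ → ℕ → Bool :=
  l.rec (fun _ a => p a) fun r _ ih t a =>
    t.rec (p a) fun t _ => ih (t + 1) a && ih t (Nat.xor a r)

theorem foldl_xor_of_allLightXors {p : ℕ → Bool} {l l' : List ℕ} {t a : ℕ}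
    (h : allLightXors p l t a) (hsub : l'.Sublist l) (hlen : l'.length ≤ t) :
    p (l'.foldl (· ^^^ ·) a) := by
  induction hsub generalizing t a with
  | slnil => exact h
  | @cons l' l r _ ih =>
    cases t with
    | zero =>
      rw [List.eq_nil_of_length_eq_zero (Nat.le_zero.1 hlen)]
      exact h
    | succ t => exact ih (Bool.and_eq_true_iff.1 h).1 hlen
  | @cons_cons l' l r _ ih =>
    cases t with
    | zero => simp at hlen
    | succ t => exact ih (Bool.and_eq_true_iff.1 h).2 (Nat.le_of_succ_le_succ hlen)

/-- Whether the packed word `x` is zero or has weight at least `d`. -/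
def heavy (d x : ℕ) : Bool :=
  Nat.ble d (x % 127) || Nat.beq x 0

theorem le_hammingNorm_of_heavy {n d : ℕ} (hn : n < 127) {v : Fin n → ZMod 2}
    (h : heavy d (packed v)) (hv : v ≠ 0) : d ≤ hammingNorm v := by
  rw [heavy, packed_mod hn, Bool.or_eq_true] at h
  exact h.elim Nat.le_of_ble_eq_true fun h0 =>
    absurd (eq_zero_of_packed_eq_zero hn (Nat.eq_of_beq_eq_true h0)) hv

theorem sum_smul_eq_list_sum {k : ℕ} {M : Type*} [AddCommGroup M] [Module (ZMod 2) M]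
    (a : Fin k → ZMod 2) (q : Fin k → M) :
    ∑ i, a i • q i = (((List.finRange k).filter (a · ≠ 0)).map q).sum := by
  have hsmul : ∀ i, a i • q i = if a i ≠ 0 then q i else 0 := fun i => by
    have h01 : ∀ c : ZMod 2, c = 0 ∨ c = 1 := by decide
    rcases h01 (a i) with h | h <;> simp [h]
  rw [← List.sum_toFinset _ ((List.nodup_finRange k).filter _), List.toFinset_filter,
    List.toFinset_finRange]
  simp only [hsmul, decide_eq_true_eq, Finset.sum_filter]

theorem length_filter_ne_zero {k : ℕ} {M : Type*} [Zero M] [DecidableEq M] (a : Fin k → M) :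
    ((List.finRange k).filter (a · ≠ 0)).length = hammingNorm a := by
  rw [← List.toFinset_card_of_nodup ((List.nodup_finRange k).filter _), List.toFinset_filter,
    List.toFinset_finRange]
  simp only [decide_eq_true_eq, hammingNorm]

variable {n k : ℕ} [NeZero n]

/-- The certificate that the words `(u, f u)` and `(u, f u + 1)` are zero or have weight at least
`d` whenever `u` is a sum of at most `t` of the words `q i`. -/
def lightSumsHeavy (s : Finset (Fin n)) (q : Fin k → Fin n → ZMod 2) (t d : ℕ) : Bool :=
  let z := packed (encode s ((0 : Fin n → ZMod 2), 1))
  allLightXors (fun x => heavy d x && heavy d (x ^^^ z))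
    ((List.finRange k).map fun i => packed (encode s (q i, 0))) t 0

theorem heavy_packed_encode_sum {s : Finset (Fin n)} {q : Fin k → Fin n → ZMod 2} {t d : ℕ}
    (h : lightSumsHeavy s q t d) {a : Fin k → ZMod 2} (ha : hammingNorm a ≤ t) (b : ZMod 2) :
    heavy d (packed (encode s (∑ i, a i • q i, b))) := by
  set l := (List.finRange k).filter (a · ≠ 0)
  have hsum : encode s (∑ i, a i • q i, 0) = (l.map fun i => encode s (q i, 0)).sum := by
    have hleft : (∑ i, a i • q i, 0) = LinearMap.inl (ZMod 2) (Fin n → ZMod 2) (ZMod 2)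
        (∑ i, a i • q i) := rfl
    rw [← sum_smul_eq_list_sum, hleft]
    simp only [map_sum, map_smul, LinearMap.inl_apply]
  have hfold : packed (encode s (∑ i, a i • q i, 0)) =
      (l.map fun i => packed (encode s (q i, 0))).foldl (· ^^^ ·) 0 := by
    rw [hsum, ← zero_add (List.sum _), packed_add_list_sum, List.map_map, packed_zero]
    rfl
  have hcoset := foldl_xor_of_allLightXors h (List.filter_sublist.map _)
    ((List.length_map _).trans_le ((length_filter_ne_zero a).trans_le ha))
  rw [← hfold, Bool.and_eq_true, ← packed_add, ← map_add, Prod.mk_add_mk, add_zero,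
    zero_add] at hcoset
  have h01 : ∀ c : ZMod 2, c = 0 ∨ c = 1 := by decide
  rcases h01 b with rfl | rfl
  exacts [hcoset.1, hcoset.2]

variable {s s' : Finset (Fin n)} {q : Fin k → Fin n → ZMod 2} {pos : Fin k → Fin n} {t d : ℕ}

theorem le_hammingNorm_encode_of_lightSumsHeavy (hn : n + n < 127) (hq : IsSystematic q pos)
    (hinv : TranslationInvariant (Submodule.span (ZMod 2) (Set.range q)))
    (h : lightSumsHeavy s q t d) {u : Fin n → ZMod 2}
    (hu : u ∈ Submodule.span (ZMod 2) (Set.range q)) (hlight : k * hammingNorm u < n * (t + 1))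
    {b : ZMod 2} (hne : encode s (u, b) ≠ 0) : d ≤ hammingNorm (encode s (u, b)) := by
  obtain ⟨m, hm⟩ := exists_hammingNorm_translate_comp_le u pos
  rw [Fintype.card_fin, Fintype.card_fin] at hm
  have hwindow : hammingNorm (τ m u ∘ pos) ≤ t :=
    Nat.lt_succ_iff.1 (Nat.lt_of_mul_lt_mul_left (hm.trans_lt hlight))
  have hheavy : heavy d (packed (encode s (τ m u, b))) := by
    rw [hq.eq_sum (hinv m u hu)]
    exact heavy_packed_encode_sum h hwindow b
  rw [← hammingNorm_ne_zero_iff, ← hammingNorm_encode_translate s m, hammingNorm_ne_zero_iff] at hne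
  rw [← hammingNorm_encode_translate s m]
  exact le_hammingNorm_of_heavy hn hheavy hne

theorem le_hammingNorm_of_mem_doubleCode {γ : Fin n → ZMod 2} {c : ZMod 2} {w : ℕ}
    (hn : n + n < 127) (hq : IsSystematic q pos)
    (hspan : Submodule.span (ZMod 2) (Set.range q) = cyclicCode γ) (hγ : IsUnit (∑ i, γ i))
    (hinverse : shiftSum s' (shiftSum s γ) = γ + Function.const _ c)
    (h : lightSumsHeavy s q t d) (h' : lightSumsHeavy s' q t d)
    (hw : k * w < n * (t + 1)) (hd : d ≤ 2 * (w + 1)) {v : Fin (n + n) → ZMod 2}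
    (hv : v ∈ doubleCode (cyclicCode γ) s) (hne : v ≠ 0) : d ≤ hammingNorm v := by
  obtain ⟨u, hu, b, rfl⟩ := mem_doubleCode.1 hv
  obtain ⟨u', hu', b', hright, hleft⟩ := exists_encode_swap hγ hinverse hu b
  have hinv : TranslationInvariant (Submodule.span (ZMod 2) (Set.range q)) :=
    hspan ▸ translationInvariant_cyclicCode γ
  have hnorm : hammingNorm (encode s (u, b)) = hammingNorm u + hammingNorm u' := by
    rw [hammingNorm_encode, hright]
  have hnorm' : hammingNorm (encode s' (u', b')) = hammingNorm u + hammingNorm u' := by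
    rw [hammingNorm_encode, hleft, add_comm]
  have hlight {m : ℕ} (hm : m ≤ w) : k * m < n * (t + 1) :=
    (Nat.mul_le_mul_left k hm).trans_lt hw
  rcases le_or_gt (hammingNorm u) w with hu_light | hu_heavy
  · exact le_hammingNorm_encode_of_lightSumsHeavy hn hq hinv h (hspan ▸ hu) (hlight hu_light) hne
  rcases le_or_gt (hammingNorm u') w with hu'_light | hu'_heavy
  · have hne' : encode s' (u', b') ≠ 0 := by
      rwa [← hammingNorm_ne_zero_iff, hnorm', ← hnorm, hammingNorm_ne_zero_iff]
    rw [hnorm, ← hnorm']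
    exact le_hammingNorm_encode_of_lightSumsHeavy hn hq hinv h' (hspan ▸ hu') (hlight hu'_light)
      hne'
  · omega

end Enumeration

section QuadraticResidue

/-- The generator matrix `[I | P]` of the binary quadratic residue code of length 47 and dimension
24. Bit `j` of the `i`-th number is the entry of `P` in row `i` and column `j`. -/
def qrRow (i : Fin 24) : Fin 47 → ZMod 2 :=
  let parity : Fin 24 → ℕ := ![
    816879, 1633758, 3267516, 6535032, 4921375, 1722065, 3444130, 6888260,
    6176871, 3208737, 6417474, 5221995, 1255993, 2511986, 5023972, 1386279,
    2772558, 5545116, 2445271, 4890542, 1657267, 3314534, 6629068, 4602743]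
  Fin.append (Pi.single i 1) fun j : Fin 23 => if (parity i).testBit j then 1 else 0

theorem isSystematic_qrRow : IsSystematic qrRow (Fin.castAdd 23) := by
  intro i j
  rw [qrRow, Fin.append_left, Pi.single_apply]
  simp only [eq_comm]

theorem span_range_qrRow :
    Submodule.span (ZMod 2) (Set.range qrRow) = cyclicCode (qrRow 0) := by
  have hsucc : ∀ i : Fin 23, ∀ j,
      qrRow i.castSucc (j - 1) = qrRow i.succ j + qrRow i.castSucc 46 * qrRow 0 j := by
    decide +kernel
  have hlast : ∀ j, qrRow (Fin.last 23) (j - 1) = qrRow (Fin.last 23) 46 * qrRow 0 j := by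
    decide +kernel
  exact span_range_eq_cyclicCode (a := fun i => qrRow i 46) (fun i => funext (hsucc i))
    (funext hlast)

theorem isUnit_sum_qrRow_zero : IsUnit (∑ i, qrRow 0 i) := by
  have hsum : ∑ i, qrRow 0 i = 1 := by decide +kernel
  exact hsum ▸ isUnit_one

theorem shiftSum_shiftSum_qrRow_zero :
    shiftSum {0, 8, 12, 14, 40, 44} (shiftSum {0, 2, 6, 9} (qrRow 0)) =
      qrRow 0 + Function.const _ 1 := by
  decide +kernel

set_option maxRecDepth 100000 in
theorem lightSumsHeavy_qrRow : lightSumsHeavy {0, 2, 6, 9} qrRow 6 27 := by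
  decide +kernel

set_option maxRecDepth 100000 in
theorem lightSumsHeavy_qrRow_inverse : lightSumsHeavy {0, 8, 12, 14, 40, 44} qrRow 6 27 := by
  decide +kernel

end QuadraticResidue

end QuasiCyclic

open QuasiCyclic

/-- there exists an `𝔽₂`-linear code of length 94, dimension 25
and minimum distance at least 27. -/
theorem stmt9 :
    ∃ C : Submodule (ZMod 2) (Fin 94 → ZMod 2),
      Module.finrank (ZMod 2) C = 25 ∧
      ∀ v ∈ C, v ≠ 0 → 27 ≤ hammingNorm v := by
  refine ⟨doubleCode (n := 47) (cyclicCode (qrRow 0)) {0, 2, 6, 9}, ?_, fun v hv hne => ?_⟩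
  · refine (finrank_doubleCode (cyclicCode (qrRow 0)) _).trans ?_
    rw [← span_range_qrRow, isSystematic_qrRow.finrank_span, Fintype.card_fin]
  · exact le_hammingNorm_of_mem_doubleCode (w := 13) (by norm_num) isSystematic_qrRow
      span_range_qrRow isUnit_sum_qrRow_zero shiftSum_shiftSum_qrRow_zero lightSumsHeavy_qrRow
      lightSumsHeavy_qrRow_inverse (by norm_num) (by norm_num) hv hne
end

section
/- There exists an 𝔽_2-linear subspace C of 𝔽_2^{102} of dimension 29 such that every nonzero element of C has Hamming weight at least 28. -/
/-!
The code is quasi-cyclic of index 2: it is invariant under the cyclic shift of the coordinates by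
two places, and it is spanned by the fifteen shifts of one word by the even numbers up to 28 and
the fourteen shifts of a second word by the odd numbers up to 27. These words are in echelon form,
so the first 29 coordinates form an information set.

Summed over the 51 shifts of a codeword, the weight of its first ten coordinates counts every
nonzero coordinate five times. Were the weight of the codeword at most 27, some shift would
therefore have at most `⌊5 * 27 / 51⌋ = 2` nonzero entries among its first ten. Hence only the
codewords with at most two such entries matter: they form 56 cosets of a subcode of dimension 19.

Each coset is settled by a bit-sliced computation. Every coordinate is, as a function of the 19
free message bits, an affine form, whose truth table is packed into a single natural number, and a
binary counter whose digits are such numbers adds up all `2 ^ 19` weights at once.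
-/

open Finset

namespace BinaryCode

section Packing

/-- The element of `𝔽₂` represented by a Boolean. -/
def bit (b : Bool) : ZMod 2 := if b then 1 else 0

/-- The vector over `𝔽₂` whose coordinates are the `n` lowest binary digits of `x`. It lets
codewords be handled as natural numbers, with `^^^` as addition. -/
def word (n x : ℕ) : Fin n → ZMod 2 := fun j => bit (x.testBit j)

theorem bit_false : bit false = 0 := rfl

theorem bit_true : bit true = 1 := rfl

theorem bit_xor (a b : Bool) : bit (a ^^ b) = bit a + bit b := by
  revert a b; decide

theorem bit_ne_zero {b : Bool} : bit b ≠ 0 ↔ b = true := by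
  revert b; decide

theorem bit_not (b : Bool) : bit (!b) = bit b + 1 := by
  revert b; decide

theorem eq_bit_iff {x : ZMod 2} {b : Bool} : x = bit b ↔ (x ≠ 0 ↔ b = true) := by
  revert x b; decide

theorem bit_surjective : Function.Surjective bit := by decide

theorem testBit_two_pow_or_two_pow {i j k : ℕ} :
    (2 ^ i ||| 2 ^ j).testBit k = true ↔ k = i ∨ k = j := by
  rw [Nat.testBit_or, Bool.or_eq_true, Nat.testBit_two_pow, Nat.testBit_two_pow,
    decide_eq_true_eq, decide_eq_true_eq, eq_comm (a := i), eq_comm (a := j)]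

theorem word_xor (n x y : ℕ) : word n (x ^^^ y) = word n x + word n y := by
  ext j
  simp only [word, Nat.testBit_xor, bit_xor, Pi.add_apply]

theorem word_zero (n : ℕ) : word n 0 = 0 := by
  ext j
  simp [word, bit]

theorem hammingNorm_bit {n : ℕ} (f : Fin n → Bool) :
    hammingNorm (fun j => bit (f j)) = (List.finRange n).countP f := by
  simp only [hammingNorm, bit_ne_zero, Finset.card_def, Finset.filter_val, Fin.univ_def,
    Multiset.filter_coe, Multiset.coe_card, List.countP_eq_length_filter, Bool.decide_eq_true]

end Packing

section Echelon

variable {r : ℕ → ℕ} {n : ℕ}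

/-- The sequence of binary words `r` is in echelon form: the lowest nonzero digit of `r i` is the
one at position `i`. -/
def IsEchelon (r : ℕ → ℕ) : Prop :=
  ∀ i, (r i).testBit i = true ∧ ∀ k < i, (r i).testBit k = false

/-- The code of length `n` spanned by the first `m` terms of the sequence of binary words `r`. -/
def rowSpan (n m : ℕ) (r : ℕ → ℕ) : Submodule (ZMod 2) (Fin n → ZMod 2) :=
  Submodule.span (ZMod 2) (Set.range fun i : Fin m => word n (r i))

theorem word_mem_rowSpan {m i : ℕ} (hi : i < m) : word n (r i) ∈ rowSpan n m r :=
  Submodule.subset_span ⟨⟨i, hi⟩, rfl⟩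

theorem rowSpan_mono {m m' : ℕ} (h : m ≤ m') : rowSpan n m r ≤ rowSpan n m' r := by
  refine Submodule.span_le.2 ?_
  rintro _ ⟨i, rfl⟩
  exact word_mem_rowSpan (i.2.trans_le h)

theorem IsEchelon.coeff_eq_zero (hr : IsEchelon r) {l m : ℕ} (hmn : m ≤ n) (u : Fin m → ZMod 2)
    (hu : ∀ k : Fin n, k < l → (∑ i, u i • word n (r i)) k = 0) (i : Fin m) (hi : i < l) :
    u i = 0 := by
  induction i using WellFoundedLT.induction with
  | _ i ih =>
  have hk := hu (Fin.castLE hmn i) hi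
  rw [Finset.sum_apply, Finset.sum_eq_single i] at hk
  · simpa [word, bit, (hr i).1] using hk
  · intro j _ hji
    rcases lt_or_gt_of_ne hji with hlt | hgt
    · simp [ih j hlt (lt_trans (Fin.lt_def.1 hlt) hi)]
    · simp [word, bit, (hr j).2 i hgt]
  · simp

theorem IsEchelon.finrank_rowSpan (hr : IsEchelon r) {m : ℕ} (hmn : m ≤ n) :
    Module.finrank (ZMod 2) (rowSpan n m r) = m := by
  have hli : LinearIndependent (ZMod 2) fun i : Fin m => word n (r i) :=
    Fintype.linearIndependent_iff.2 fun u hu i =>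
      hr.coeff_eq_zero hmn u (fun k _ => congrFun hu k) i i.2
  exact (finrank_span_eq_card hli).trans (Fintype.card_fin m)

theorem IsEchelon.mem_rowSpan_add (hr : IsEchelon r) {l m : ℕ} (hlm : l + m ≤ n)
    {v : Fin n → ZMod 2} (hv : v ∈ rowSpan n (l + m) r) (h0 : ∀ k : Fin n, k < l → v k = 0) :
    v ∈ rowSpan n m fun i => r (l + i) := by
  obtain ⟨u, rfl⟩ := (Submodule.mem_span_range_iff_exists_fun _).1 hv
  have hu (i : Fin l) : u (Fin.castAdd m i) = 0 := hr.coeff_eq_zero hlm u h0 _ i.2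
  rw [Fin.sum_univ_add]
  simp only [hu, zero_smul, Finset.sum_const_zero, zero_add]
  exact Submodule.sum_mem _ fun i _ =>
    Submodule.smul_mem _ _ (Submodule.subset_span ⟨i, rfl⟩)

/-- The combination of the first `m` rows of `r` that agrees with `o` in the lowest `m` digits,
found by eliminating one digit after the other when `r` is in echelon form. -/
def encode (r : ℕ → ℕ) (o : ℕ) : ℕ → ℕ
  | 0 => 0
  | m + 1 =>
    let x := encode r o m
    if x.testBit m = o.testBit m then x else x ^^^ r m

theorem word_encode_mem (n : ℕ) (r : ℕ → ℕ) (o m : ℕ) : word n (encode r o m) ∈ rowSpan n m r := by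
  induction m with
  | zero => simpa only [encode, word_zero] using Submodule.zero_mem _
  | succ m ih =>
    have ih' := rowSpan_mono m.le_succ ih
    simp only [encode]
    split
    · exact ih'
    · rw [word_xor]
      exact Submodule.add_mem _ ih' (word_mem_rowSpan m.lt_succ_self)

theorem IsEchelon.testBit_encode (hr : IsEchelon r) (o : ℕ) {m k : ℕ} (hk : k < m) :
    (encode r o m).testBit k = o.testBit k := by
  induction m with
  | zero => omega
  | succ m ih =>
    simp only [encode]
    rcases Nat.lt_succ_iff_lt_or_eq.1 hk with hlt | rfl
    · split
      · exact ih hlt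
      · rw [Nat.testBit_xor, (hr m).2 k hlt, Bool.xor_false, ih hlt]
    · split
      · assumption
      · rw [Nat.testBit_xor, (hr k).1, Bool.xor_true, Bool.not_eq]
        assumption

end Echelon

section TruthTable

/-- The number whose `2 ^ n` lowest digits are all `1`: the truth table of the constant `1`. -/
def ones (n : ℕ) : ℕ := 2 ^ 2 ^ n - 1

/-- The truth table of the linear form `∑ i < n, c i * x i` on `𝔽₂ⁿ`: its digit at position `p` is
the value at the vector of the binary digits of `p`. -/
def truthTable : ℕ → (ℕ → Bool) → ℕ
  | 0, _ => 0
  | n + 1, c =>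
    let t := truthTable n c
    2 ^ 2 ^ n * (if c n then ones n ^^^ t else t) + t

variable {n p : ℕ}

theorem testBit_ones (hp : p < 2 ^ n) : (ones n).testBit p = true := by
  simpa only [ones, Nat.testBit_two_pow_sub_one, decide_eq_true_eq] using hp

theorem truthTable_lt (n : ℕ) (c : ℕ → Bool) : truthTable n c < 2 ^ 2 ^ n := by
  induction n with
  | zero => simp [truthTable]
  | succ n ih =>
    have hones : ones n < 2 ^ 2 ^ n := Nat.sub_lt (by positivity) one_pos
    have hhigh : (if c n then ones n ^^^ truthTable n c else truthTable n c) < 2 ^ 2 ^ n := by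
      split
      · exact Nat.xor_lt_two_pow hones ih
      · exact ih
    calc truthTable (n + 1) c
        < 2 ^ 2 ^ n * ((if c n then ones n ^^^ truthTable n c else truthTable n c) + 1) := by
          simpa only [truthTable, mul_add_one] using Nat.add_lt_add_left ih _
      _ ≤ 2 ^ 2 ^ n * 2 ^ 2 ^ n := Nat.mul_le_mul_left _ hhigh
      _ = 2 ^ 2 ^ (n + 1) := by rw [← pow_add, ← two_mul, ← pow_succ']

theorem bit_testBit_truthTable (c : ℕ → Bool) (hp : p < 2 ^ n) :
    bit ((truthTable n c).testBit p) = ∑ i : Fin n, bit (p.testBit i) * bit (c i) := by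
  induction n generalizing p with
  | zero => simp [truthTable, bit]
  | succ n ih =>
    rw [truthTable, Nat.testBit_two_pow_mul_add _ (truthTable_lt n c), Fin.sum_univ_castSucc]
    simp only [Fin.val_castSucc, Fin.val_last]
    rcases lt_or_ge p (2 ^ n) with hlt | hge
    · rw [if_pos hlt, ih hlt, Nat.testBit_lt_two_pow hlt]
      simp [bit]
    · obtain ⟨q, rfl⟩ := Nat.exists_eq_add_of_le hge
      have hq : q < 2 ^ n := by omega
      have hlow (i : Fin n) : (2 ^ n + q).testBit i = q.testBit i :=
        Nat.testBit_two_pow_add_gt i.2 q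
      have htop : (2 ^ n + q).testBit n = true := by
        rw [Nat.testBit_two_pow_add_eq, Nat.testBit_lt_two_pow hq, Bool.not_false]
      simp only [hlow, htop, ← ih hq, hge.not_gt, if_false, Nat.add_sub_cancel_left]
      cases c n <;> simp [Nat.testBit_xor, bit_not, testBit_ones hq, bit_true, bit_false]

end TruthTable

section Counter

/-- The value at position `p` of a bit-sliced counter, a list of numbers whose digits at
position `p`, least significant first, are the binary digits of that value. -/
def counterValue (p : ℕ) : List ℕ → ℕ
  | [] => 0
  | s :: cs => (s.testBit p).toNat + 2 * counterValue p cs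

/-- Adds the digit of `x` at every position to a bit-sliced counter by a ripple of carries. The last
slice is sticky: once set, a digit of it stays set, so an overflow cannot reset the counter. -/
def addSlice : List ℕ → ℕ → List ℕ
  | [], _ => []
  | [s], x => [s ||| x]
  | s :: c :: cs, x => (s ^^^ x) :: addSlice (c :: cs) (s &&& x)

/-- The bit-sliced counter with `k + 1` slices and the value `s` at all `2 ^ n` positions, for
`s < 2 ^ k`. -/
def constCounter (n : ℕ) : ℕ → ℕ → List ℕ
  | 0, _ => [0]
  | k + 1, s => (if s.testBit 0 then ones n else 0) :: constCounter n k (s / 2)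

theorem counterValue_addSlice_le (p : ℕ) (cs : List ℕ) (x : ℕ) :
    counterValue p (addSlice cs x) ≤ counterValue p cs + (x.testBit p).toNat := by
  induction cs, x using addSlice.induct with
  | case1 => simp [addSlice, counterValue]
  | case2 s x =>
    simp only [addSlice, counterValue, Nat.testBit_or]
    cases s.testBit p <;> cases x.testBit p <;> decide
  | case3 s c cs x ih =>
    rw [addSlice, counterValue, counterValue, Nat.testBit_xor]
    rw [Nat.testBit_and] at ih
    cases hs : s.testBit p <;> cases hx : x.testBit p <;>
      simp only [hs, hx, Bool.and_true, Bool.and_false, Bool.xor_true, Bool.xor_false,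
        Bool.not_true, Bool.not_false, Bool.toNat_true, Bool.toNat_false] at ih ⊢ <;>
      omega

theorem counterValue_foldl_addSlice_le (p : ℕ) (xs cs : List ℕ) :
    counterValue p (xs.foldl addSlice cs) ≤ counterValue p cs + xs.countP (·.testBit p) := by
  induction xs generalizing cs with
  | nil => simp
  | cons x xs ih =>
    have hx := counterValue_addSlice_le p cs x
    have hxs := ih (addSlice cs x)
    rw [List.foldl_cons, List.countP_cons]
    cases h : x.testBit p <;>
      simp only [h, Bool.toNat_true, Bool.toNat_false, if_true, Bool.false_eq_true, if_false]
        at hx ⊢ <;>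
      omega

theorem counterValue_constCounter_le (n p k s : ℕ) : counterValue p (constCounter n k s) ≤ s := by
  induction k generalizing s with
  | zero => simp [constCounter, counterValue]
  | succ k ih =>
    have hs := ih (s / 2)
    rw [constCounter, counterValue]
    split
    case isTrue hodd =>
      have := Bool.toNat_le ((ones n).testBit p)
      simp only [Nat.testBit_zero, decide_eq_true_eq] at hodd
      omega
    case isFalse =>
      simp only [Nat.zero_testBit, Bool.toNat_false]
      omega

theorem length_addSlice (cs : List ℕ) (x : ℕ) : (addSlice cs x).length = cs.length := by
  induction cs, x using addSlice.induct with
  | case1 | case2 => rfl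
  | case3 s c cs x ih => rw [addSlice, List.length_cons, ih]; rfl

theorem length_foldl_addSlice (xs cs : List ℕ) : (xs.foldl addSlice cs).length = cs.length := by
  induction xs generalizing cs with
  | nil => rfl
  | cons x xs ih => rw [List.foldl_cons, ih, length_addSlice]

theorem length_constCounter (n k s : ℕ) : (constCounter n k s).length = k + 1 := by
  induction k generalizing s with
  | zero => rfl
  | succ k ih => rw [constCounter, List.length_cons, ih]

theorem two_pow_le_counterValue {p k : ℕ} {cs : List ℕ} (hk : cs.length = k + 1)
    (hp : (cs.getLastD 0).testBit p = true) : 2 ^ k ≤ counterValue p cs := by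
  induction k generalizing cs with
  | zero =>
    obtain ⟨s, rfl⟩ := List.length_eq_one_iff.1 hk
    simp_all [counterValue]
  | succ k ih =>
    obtain ⟨s, c, cs, rfl⟩ : ∃ s c cs', cs = s :: c :: cs' := by
      match cs, hk with
      | s :: c :: cs', _ => exact ⟨s, c, cs', rfl⟩
    have htail := ih (cs := c :: cs) (by simpa using hk) (by simpa using hp)
    rw [counterValue, pow_succ]
    omega

end Counter

section Coset

variable {N n d a p : ℕ} {r : ℕ → ℕ}

/-- The truth table of the `j`-th coordinate of `a + ∑ i < n, x i • r i`, as an affine form in the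
message `x`. -/
def coordTable (n : ℕ) (r : ℕ → ℕ) (a j : ℕ) : ℕ :=
  truthTable n (fun i => (r i).testBit j) ^^^ (if a.testBit j then ones n else 0)

/-- The truth tables of the first `N` coordinates of `a + ∑ i < n, x i • r i`: at position `p` their
digits form the codeword with message `p`. -/
def coordTables (N n : ℕ) (r : ℕ → ℕ) (a : ℕ) : List ℕ :=
  (List.finRange N).map fun j : Fin N => coordTable n r a j

/-- The truth table of the predicate that `a + ∑ i < n, x i • r i`, as a word of length `N`, has
weight at least `d`. The counter starts at `2 ^ k - d`, so that its last slice, of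
value `2 ^ k`, records the weights that reach `d`. -/
def heavyTable (N n d : ℕ) (r : ℕ → ℕ) (a : ℕ) : ℕ :=
  let k := d.log2 + 1
  ((coordTables N n r a).foldl addSlice (constCounter n k (2 ^ k - d))).getLastD 0

theorem bit_testBit_coordTable (j : Fin N) (hp : p < 2 ^ n) :
    bit ((coordTable n r a j).testBit p) =
      (word N a + ∑ i : Fin n, bit (p.testBit i) • word N (r i)) j := by
  have hconst : (if a.testBit j then ones n else 0).testBit p = a.testBit j := by
    cases a.testBit j <;> simp [testBit_ones hp]
  rw [coordTable, Nat.testBit_xor, bit_xor, bit_testBit_truthTable _ hp, hconst, add_comm]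
  simp [word]

theorem countP_coordTables (hp : p < 2 ^ n) :
    (coordTables N n r a).countP (·.testBit p) =
      hammingNorm (word N a + ∑ i : Fin n, bit (p.testBit i) • word N (r i)) := by
  rw [coordTables, List.countP_map, ← hammingNorm_bit]
  exact congrArg hammingNorm (funext fun j => bit_testBit_coordTable j hp)

theorem le_hammingNorm_of_testBit_heavyTable (hp : p < 2 ^ n)
    (h : (heavyTable N n d r a).testBit p = true) :
    d ≤ hammingNorm (word N a + ∑ i : Fin n, bit (p.testBit i) • word N (r i)) := by
  set k := d.log2 + 1
  have hd : d < 2 ^ k := Nat.lt_log2_self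
  have hlast : 2 ^ k ≤ counterValue p
      ((coordTables N n r a).foldl addSlice (constCounter n k (2 ^ k - d))) :=
    two_pow_le_counterValue ((length_foldl_addSlice _ _).trans (length_constCounter _ _ _)) h
  have hcount := counterValue_foldl_addSlice_le p (coordTables N n r a)
    (constCounter n k (2 ^ k - d))
  have hstart := counterValue_constCounter_le n p k (2 ^ k - d)
  rw [countP_coordTables hp] at hcount
  omega

theorem exists_eq_sum_bit_of_mem_rowSpan {v : Fin N → ZMod 2} (hv : v ∈ rowSpan N n r) :
    ∃ p < 2 ^ n, v = ∑ i : Fin n, bit (p.testBit i) • word N (r i) := by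
  obtain ⟨u, rfl⟩ := (Submodule.mem_span_range_iff_exists_fun _).1 hv
  obtain ⟨b, rfl⟩ := bit_surjective.comp_left u
  refine ⟨Nat.ofBits b, Nat.ofBits_lt_two_pow b, ?_⟩
  simp only [Nat.testBit_ofBits_lt, Fin.is_lt, Fin.eta, Function.comp_apply]

theorem le_hammingNorm_add_of_heavyTable_eq (h : heavyTable N n d r a = ones n)
    {v : Fin N → ZMod 2} (hv : v ∈ rowSpan N n r) : d ≤ hammingNorm (word N a + v) := by
  obtain ⟨p, hp, rfl⟩ := exists_eq_sum_bit_of_mem_rowSpan hv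
  exact le_hammingNorm_of_testBit_heavyTable hp (h ▸ testBit_ones hp)

theorem le_hammingNorm_of_heavyTable_zero_eq (h : heavyTable N n d r 0 ||| 1 = ones n)
    {v : Fin N → ZMod 2} (hv : v ∈ rowSpan N n r) (h0 : v ≠ 0) : d ≤ hammingNorm v := by
  obtain ⟨p, hp, rfl⟩ := exists_eq_sum_bit_of_mem_rowSpan hv
  have hp0 : p ≠ 0 := by
    rintro rfl
    exact h0 (by simp [bit])
  have htable : (heavyTable N n d r 0).testBit p = true := by
    simpa [Nat.testBit_or, Nat.testBit_one_eq_true_iff_self_eq_zero, hp0, testBit_ones hp]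
      using congrArg (Nat.testBit · p) h
  simpa only [word_zero, zero_add] using le_hammingNorm_of_testBit_heavyTable hp htable

theorem le_hammingNorm_of_heavyTable_encode_eq (hr : IsEchelon r) {l o : ℕ} (hN : l + n ≤ N)
    {v : Fin N → ZMod 2} (hv : v ∈ rowSpan N (l + n) r)
    (ho : ∀ k : Fin N, k < l → v k = bit (o.testBit k))
    (h : heavyTable N n d (fun i => r (l + i)) (encode r o l) = ones n) : d ≤ hammingNorm v := by
  set e := word N (encode r o l) with he
  have hdiff : v - e ∈ rowSpan N n fun i => r (l + i) := by
    refine hr.mem_rowSpan_add hN (sub_mem hv ?_) fun k hk => ?_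
    · exact rowSpan_mono (Nat.le_add_right l n) (word_encode_mem N r o l)
    · rw [Pi.sub_apply, ho k hk, he, word, hr.testBit_encode o hk, sub_self]
  simpa only [← he, add_sub_cancel] using le_hammingNorm_add_of_heavyTable_eq h hdiff

end Coset

section Counting

theorem exists_card_filter_mem_le {ι α β : Type*} [Fintype ι] [Nonempty ι] [Fintype α]
    [DecidableEq β] (f : ι → α → β) {c : ℕ} (hf : ∀ b, #{p : ι × α | f p.1 p.2 = b} ≤ c)
    (s : Finset β) : ∃ i, Fintype.card ι * #{a | f i a ∈ s} ≤ c * #s := by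
  have hsum : ∑ i, #{a | f i a ∈ s} ≤ c * #s := by
    calc ∑ i, #{a | f i a ∈ s}
        = #{p : ι × α | f p.1 p.2 ∈ s} := by
          simp only [Finset.card_filter, Fintype.sum_prod_type]
      _ = ∑ b ∈ s, #{p ∈ {p : ι × α | f p.1 p.2 ∈ s} | f p.1 p.2 = b} :=
          Finset.card_eq_sum_card_fiberwise fun p hp => by simpa using hp
      _ ≤ ∑ _b ∈ s, c := Finset.sum_le_sum fun b _ =>
          (Finset.card_le_card (Finset.filter_subset_filter _ (Finset.subset_univ _))).trans (hf b)
      _ = c * #s := by rw [Finset.sum_const, smul_eq_mul, mul_comm]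
  obtain ⟨i, -, hi⟩ := Finset.exists_le_of_sum_le (s := univ)
    (f := fun i => Fintype.card ι * #{a | f i a ∈ s}) (g := fun _ => c * #s)
    Finset.univ_nonempty (by
      rw [← Finset.mul_sum, Finset.sum_const, smul_eq_mul, Finset.card_univ]
      exact Nat.mul_le_mul_left _ hsum)
  exact ⟨i, hi⟩

theorem exists_le_eq_pair_of_card_le_two {ι : Type*} [LinearOrder ι] {s : Finset ι}
    (hs : s.Nonempty) (hcard : #s ≤ 2) : ∃ i j, i ≤ j ∧ s = {i, j} := by
  obtain hone | htwo : #s = 1 ∨ #s = 2 := by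
    have := hs.card_pos
    omega
  · obtain ⟨i, rfl⟩ := Finset.card_eq_one.1 hone
    exact ⟨i, i, le_rfl, (Finset.pair_eq_singleton i).symm⟩
  · obtain ⟨i, j, -, rfl⟩ := Finset.card_eq_two.1 htwo
    rcases le_total i j with hij | hji
    · exact ⟨i, j, hij, rfl⟩
    · exact ⟨j, i, hji, Finset.pair_comm i j⟩

theorem hammingNorm_comp_add_right {ι β : Type*} [AddGroup ι] [Fintype ι] [DecidableEq β] [Zero β]
    (v : ι → β) (a : ι) : hammingNorm (v ∘ (· + a)) = hammingNorm v :=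
  Finset.card_equiv (Equiv.addRight a) fun i => by simp

end Counting

section QuasiCyclic

/-- The rows of an echelon generator matrix of the quasi-cyclic code. Position `2 * k + b` holds the
coefficient of `x ^ k` in component `b` of an element of `(𝔽₂[x] / (x ^ 51 - 1))²`, so that
multiplication by `x` is the shift by two positions; the rows are the shifts of `row 0` and `row 1`
by even numbers. -/
def row (i : ℕ) : ℕ :=
  (if i % 2 = 0 then 0x3804a8881d8ed7e7a49 else 0x204a3d5132aa9bef221) <<< i

/-- The quasi-cyclic `[102, 29]` code of minimum distance at least 28. -/
def code : Submodule (ZMod 2) (Fin 102 → ZMod 2) := rowSpan 102 29 row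

theorem isEchelon_row : IsEchelon row := by
  intro i
  refine ⟨?_, fun k hk => ?_⟩
  · rw [row, Nat.testBit_shiftLeft]
    split <;> simp
  · rw [row, Nat.testBit_shiftLeft]
    simp [hk]

theorem finrank_code : Module.finrank (ZMod 2) code = 29 :=
  isEchelon_row.finrank_rowSpan (by norm_num)

theorem testBit_encode_row_shiftRight : ∀ (i : Fin 29) (j : Fin 102),
    (encode row (row i >>> 2) 29).testBit j = (row i).testBit (j + 2 : Fin 102) := by
  decide +kernel

theorem comp_add_two_mem_code {v : Fin 102 → ZMod 2} (hv : v ∈ code) : v ∘ (· + 2) ∈ code := by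
  suffices h : code ≤ code.comap (LinearMap.funLeft (ZMod 2) (ZMod 2) (· + 2)) from h hv
  refine Submodule.span_le.2 ?_
  rintro _ ⟨i, rfl⟩
  have hrow : word 102 (encode row (row i >>> 2) 29) = word 102 (row i) ∘ (· + 2) :=
    funext fun j => congrArg bit (testBit_encode_row_shiftRight i j)
  have hmem := word_encode_mem 102 row (row i >>> 2) 29
  rwa [hrow] at hmem

theorem comp_add_nsmul_mem_code {v : Fin 102 → ZMod 2} (hv : v ∈ code) (k : ℕ) :
    v ∘ (· + k • 2) ∈ code := by
  induction k with
  | zero => simpa [Function.comp_def] using hv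
  | succ k ih => simpa [Function.comp_def, succ_nsmul', add_assoc] using comp_add_two_mem_code ih

theorem card_shift_eq : ∀ j : Fin 102,
    #{p : Fin 51 × Fin 10 | Fin.castLE (by norm_num) p.2 + p.1.val • 2 = j} ≤ 5 := by
  decide +kernel

theorem exists_shift_card_le_two {v : Fin 102 → ZMod 2} (hv : hammingNorm v < 28) :
    ∃ k : ℕ, #{a : Fin 10 | v (Fin.castLE (by norm_num) a + k • 2) ≠ 0} ≤ 2 := by
  obtain ⟨k, hk⟩ := exists_card_filter_mem_le
    (fun (k : Fin 51) (a : Fin 10) => (Fin.castLE (by norm_num) a + k.val • 2 : Fin 102))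
    card_shift_eq {j | v j ≠ 0}
  refine ⟨k, ?_⟩
  change _ ≤ 5 * hammingNorm v at hk
  simp only [Fintype.card_fin, Finset.mem_filter_univ] at hk
  omega

-- Position `0` belongs to the zero codeword, whence the `||| 1`.
theorem heavyTable_zero : heavyTable 102 19 28 (fun i => row (10 + i)) 0 ||| 1 = ones 19 := by
  decide +kernel

theorem heavyTable_encode : ∀ i j : Fin 10, i ≤ j →
    heavyTable 102 19 28 (fun i => row (10 + i)) (encode row (2 ^ i.val ||| 2 ^ j.val) 10) =
      ones 19 := by
  intro i
  fin_cases i <;> decide +kernel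

theorem le_hammingNorm_of_card_le_two {v : Fin 102 → ZMod 2} (hv : v ∈ code) (h0 : v ≠ 0)
    (hcard : #{a : Fin 10 | v (Fin.castLE (by norm_num) a) ≠ 0} ≤ 2) : 28 ≤ hammingNorm v := by
  set S : Finset (Fin 10) := {a | v (Fin.castLE (by norm_num) a) ≠ 0} with hS
  have hmem (a : Fin 10) : v (Fin.castLE (by norm_num) a) ≠ 0 ↔ a ∈ S := by
    rw [hS, Finset.mem_filter_univ]
  rcases S.eq_empty_or_nonempty with hempty | hne
  · have hvanish : ∀ k : Fin 102, k < 10 → v k = 0 := fun k hk => by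
      simpa [hempty] using hmem ⟨k, hk⟩
    exact le_hammingNorm_of_heavyTable_zero_eq heavyTable_zero
      (isEchelon_row.mem_rowSpan_add (by norm_num) hv hvanish) h0
  · obtain ⟨i, j, hij, hSij⟩ := exists_le_eq_pair_of_card_le_two hne hcard
    refine le_hammingNorm_of_heavyTable_encode_eq (l := 10) (n := 19)
      (o := 2 ^ i.val ||| 2 ^ j.val) isEchelon_row (by norm_num) hv (fun k hk => ?_)
      (heavyTable_encode i j hij)
    have hk' : v k ≠ 0 ↔ _ := hmem ⟨k, hk⟩
    rw [eq_bit_iff, hk', hSij, testBit_two_pow_or_two_pow, Finset.mem_insert,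
      Finset.mem_singleton, Fin.ext_iff, Fin.ext_iff]

theorem le_hammingNorm_of_mem_code {v : Fin 102 → ZMod 2} (hv : v ∈ code) (h0 : v ≠ 0) :
    28 ≤ hammingNorm v := by
  by_contra! hlt
  obtain ⟨k, hk⟩ := exists_shift_card_le_two hlt
  have hnorm := hammingNorm_comp_add_right v (k • 2)
  have hne : v ∘ (· + k • 2) ≠ 0 := by
    rwa [← hammingNorm_ne_zero_iff, hnorm, hammingNorm_ne_zero_iff]
  have hle := le_hammingNorm_of_card_le_two (comp_add_nsmul_mem_code hv k) hne hk
  rw [hnorm] at hle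
  exact hlt.not_ge hle

end QuasiCyclic

end BinaryCode

/-- there exists an `𝔽₂`-linear code of length 102, dimension 29
and minimum distance at least 28. -/
theorem stmt10 :
    ∃ C : Submodule (ZMod 2) (Fin 102 → ZMod 2),
      Module.finrank (ZMod 2) C = 29 ∧
      ∀ v ∈ C, v ≠ 0 → 28 ≤ hammingNorm v := by
  exact ⟨BinaryCode.code, BinaryCode.finrank_code,
    fun _ hv h0 => BinaryCode.le_hammingNorm_of_mem_code hv h0⟩
end

section
/- There exists an 𝔽_2-linear subspace C of 𝔽_2^{101} of dimension 29 such that every nonzero element of C has Hamming weight at least 27. -/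
/-!
The code is obtained from a `[102, 29, 28]` code by deleting one coordinate. The longer code is
quasi-cyclic of index 2, that is, invariant under the cyclic shift by two positions, and its
generator matrix is systematic on the first 29 positions. The 51 even shifts of that window cover
every position at most 15 times, so they contain at most `15 * 27 = 405 < 51 * 8` ones of a word of
weight at most 27, counted with multiplicity, and one of them contains at most 7. Hence, after a
shift, a nonzero codeword of weight at most 27 would be a sum of at most 7 rows of the generator
matrix. There are about two million such sums; a bit-sliced enumeration, which treats all sums of
`w` rows simultaneously, shows that they all have weight at least 28.
-/

open Matrix

section Windows

variable {A κ ι β : Type*} [Fintype A] [Fintype κ] [Fintype ι] [Zero β] [DecidableEq β]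

theorem hammingNorm_comp_equiv (v : ι → β) (σ : κ ≃ ι) : hammingNorm (v ∘ σ) = hammingNorm v := by
  simp only [hammingNorm, Finset.card_filter, Function.comp_apply]
  exact σ.sum_comp fun j => if v j ≠ 0 then 1 else 0

theorem sum_hammingNorm_comp_le [DecidableEq ι] {I : A → κ → ι} {c : ℕ}
    (hI : ∀ j, Finset.card {p : A × κ | I p.1 p.2 = j} ≤ c) (v : ι → β) :
    ∑ a, hammingNorm (v ∘ I a) ≤ c * hammingNorm v := by
  calc ∑ a, hammingNorm (v ∘ I a)
      = Finset.card {p : A × κ | v (I p.1 p.2) ≠ 0} := by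
        simp only [hammingNorm, Finset.card_filter, Fintype.sum_prod_type, Function.comp_apply]
    _ ≤ c * hammingNorm v :=
        Finset.card_le_mul_card_image_of_maps_to (f := fun p => I p.1 p.2) (by simp) c
          fun j _ => (Finset.card_le_card <| by grind).trans (hI j)

theorem exists_hammingNorm_comp_le [DecidableEq ι] {I : A → κ → ι} {c d w : ℕ}
    (hI : ∀ j, Finset.card {p : A × κ | I p.1 p.2 = j} ≤ c)
    (hcd : c * d < Fintype.card A * (w + 1)) {v : ι → β} (hv : hammingNorm v ≤ d) :
    ∃ a, hammingNorm (v ∘ I a) ≤ w := by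
  by_contra! hheavy
  refine hcd.not_ge ?_
  calc Fintype.card A * (w + 1) ≤ ∑ a, hammingNorm (v ∘ I a) :=
        Finset.card_nsmul_le_sum Finset.univ _ (w + 1) fun a _ => hheavy a
    _ ≤ c * hammingNorm v := sum_hammingNorm_comp_le hI v
    _ ≤ c * d := by gcongr

end Windows

section Puncture

variable {R : Type*} {n d : ℕ} (i : Fin (n + 1))

/-- The code obtained from `C` by puncturing, that is, by deleting the `i`-th coordinate of every
codeword. -/
def puncture [Semiring R] (C : Submodule R (Fin (n + 1) → R)) : Submodule R (Fin n → R) :=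
  C.map (LinearMap.funLeft R R i.succAbove)

theorem hammingNorm_le_hammingNorm_comp_succAbove_add_one [Zero R] [DecidableEq R]
    (v : Fin (n + 1) → R) : hammingNorm v ≤ hammingNorm (v ∘ i.succAbove) + 1 := by
  simp only [hammingNorm, Finset.card_filter, Fin.sum_univ_succAbove _ i, Function.comp_apply]
  rw [add_comm]
  gcongr
  split_ifs <;> simp

theorem le_hammingNorm_of_mem_puncture [Semiring R] [DecidableEq R]
    {C : Submodule R (Fin (n + 1) → R)} (hC : ∀ v ∈ C, v ≠ 0 → d + 1 ≤ hammingNorm v) :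
    ∀ v ∈ puncture i C, v ≠ 0 → d ≤ hammingNorm v := by
  rintro _ ⟨v, hv, rfl⟩ hne
  have hv0 : v ≠ 0 := fun h => hne (h ▸ map_zero _)
  exact Nat.le_of_succ_le_succ <|
    (hC v hv hv0).trans (hammingNorm_le_hammingNorm_comp_succAbove_add_one i v)

theorem finrank_puncture [Ring R] [DecidableEq R] {C : Submodule R (Fin (n + 1) → R)}
    (hC : ∀ v ∈ C, v ≠ 0 → 2 ≤ hammingNorm v) :
    Module.finrank R (puncture i C) = Module.finrank R C := by
  rw [puncture, ← LinearMap.range_domRestrict]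
  refine LinearMap.finrank_range_of_inj ((injective_iff_map_eq_zero _).2 fun v hv => ?_)
  by_contra hne
  have hlight := hammingNorm_le_hammingNorm_comp_succAbove_add_one i v.1
  rw [show v.1 ∘ i.succAbove = 0 from hv, hammingNorm_zero] at hlight
  have hheavy := hC v v.2 (by simpa using hne)
  omega

end Puncture

section Systematic

variable {A κ ι R : Type*} [Fintype κ]

theorem comp_mem_range_vecMulLinear [Semiring R] {G : Matrix κ ι R} {σ : ι → ι}
    (h : ∀ k, G k ∘ σ ∈ LinearMap.range G.vecMulLinear) :
    ∀ v ∈ LinearMap.range G.vecMulLinear, v ∘ σ ∈ LinearMap.range G.vecMulLinear := by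
  have hspan : Submodule.span R (Set.range G.row) ≤
      (LinearMap.range G.vecMulLinear).comap (LinearMap.funLeft R R σ) :=
    Submodule.span_le.2 (Set.range_subset_iff.2 h)
  rwa [← range_vecMulLinear] at hspan

theorem comp_add_nsmul_mem [Semiring R] [AddCommMonoid ι] {C : Submodule R (ι → R)} {x : ι}
    (h : ∀ v ∈ C, v ∘ (· + x) ∈ C) (n : ℕ) : ∀ v ∈ C, v ∘ (· + n • x) ∈ C := by
  induction n with
  | zero => simp [Function.comp_def]
  | succ n ih =>
    intro v hv
    have hcomp : v ∘ (· + (n + 1) • x) = (v ∘ (· + n • x)) ∘ (· + x) := by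
      ext j
      simp only [Function.comp_apply, succ_nsmul', add_assoc]
    exact hcomp ▸ h _ (ih v hv)

variable [DecidableEq κ] [Semiring R] {G : Matrix κ ι R} {I : κ → ι}

theorem vecMul_comp_of_submatrix_eq_one (hG : G.submatrix id I = 1) (m : κ → R) :
    (m ᵥ* G) ∘ I = m :=
  calc (m ᵥ* G) ∘ I = m ᵥ* G.submatrix id I := rfl
    _ = m := by rw [hG, vecMul_one]

theorem comp_vecMul_of_mem_range (hG : G.submatrix id I = 1) {v : ι → R}
    (hv : v ∈ LinearMap.range G.vecMulLinear) : (v ∘ I) ᵥ* G = v := by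
  obtain ⟨m, rfl⟩ := hv
  rw [vecMulLinear_apply, vecMul_comp_of_submatrix_eq_one hG]

theorem vecMulLinear_injective_of_submatrix_eq_one (hG : G.submatrix id I = 1) :
    Function.Injective G.vecMulLinear :=
  Function.LeftInverse.injective (g := (· ∘ I)) (vecMul_comp_of_submatrix_eq_one hG)

theorem lt_hammingNorm_of_light_messages [Fintype A] [Fintype ι] [DecidableEq ι] [DecidableEq R]
    (hG : G.submatrix id I = 1) {σ : A → Equiv.Perm ι}
    (hσ : ∀ a, ∀ v ∈ LinearMap.range G.vecMulLinear, v ∘ σ a ∈ LinearMap.range G.vecMulLinear)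
    {c d w : ℕ} (hcover : ∀ j, Finset.card {p : A × κ | σ p.1 (I p.2) = j} ≤ c)
    (hcd : c * d < Fintype.card A * (w + 1))
    (hlight : ∀ m ≠ 0, hammingNorm m ≤ w → d < hammingNorm (m ᵥ* G)) :
    ∀ v ∈ LinearMap.range G.vecMulLinear, v ≠ 0 → d < hammingNorm v := by
  intro v hv hne
  by_contra! hvd
  obtain ⟨a, ha⟩ := exists_hammingNorm_comp_le (I := fun a => σ a ∘ I) hcover hcd hvd
  have hcode : ((v ∘ σ a) ∘ I) ᵥ* G = v ∘ σ a := comp_vecMul_of_mem_range hG (hσ a v hv)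
  have hmsg : (v ∘ σ a) ∘ I ≠ 0 := by
    intro h0
    rw [h0, zero_vecMul, eq_comm, ← hammingNorm_eq_zero, hammingNorm_comp_equiv,
      hammingNorm_eq_zero] at hcode
    exact hne hcode
  have hheavy := hlight _ hmsg ha
  rw [hcode, hammingNorm_comp_equiv] at hheavy
  exact hheavy.not_ge hvd

end Systematic

section BinaryWords

/-- The bitwise sum modulo 2 of a list of natural numbers. -/
def xorSum (s : List ℕ) : ℕ := s.foldr (· ^^^ ·) 0

/-- The word of length `n` over `𝔽₂` whose `j`-th coordinate is the bit of `x` of weight `2 ^ j`. -/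
def binaryWord (n x : ℕ) : Fin n → ZMod 2 := fun j => if x.testBit j then 1 else 0

theorem binaryWord_xor (n x y : ℕ) : binaryWord n (x ^^^ y) = binaryWord n x + binaryWord n y := by
  ext j
  simp only [binaryWord, Nat.testBit_xor, Pi.add_apply]
  cases x.testBit j <;> cases y.testBit j <;> decide

theorem binaryWord_xorSum (n : ℕ) (s : List ℕ) :
    binaryWord n (xorSum s) = (s.map (binaryWord n)).sum := by
  induction s with
  | nil => ext; simp [xorSum, binaryWord]
  | cons x s ih => rw [List.map_cons, List.sum_cons, ← ih, ← binaryWord_xor]; rfl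

theorem hammingNorm_eq_countP_finRange {β : Type*} [Zero β] [DecidableEq β] {n : ℕ}
    (v : Fin n → β) : hammingNorm v = (List.finRange n).countP (v · ≠ 0) := by
  rw [List.countP_eq_length_filter]
  rfl

theorem hammingNorm_binaryWord (n x : ℕ) :
    hammingNorm (binaryWord n x) = (List.finRange n).countP fun j : Fin n => x.testBit j := by
  rw [hammingNorm_eq_countP_finRange]
  exact List.countP_congr fun j _ => by simp [binaryWord]

variable {k : ℕ} (r : Fin k → ℕ) (n : ℕ)

/-- The matrix over `𝔽₂` with `n` columns whose `i`-th row is encoded by `r i`. -/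
def binaryMatrix : Matrix (Fin k) (Fin n) (ZMod 2) := .of fun i => binaryWord n (r i)

/-- The linear code of length `n` spanned by the words encoded by the numbers `r i`. -/
abbrev binaryCode : Submodule (ZMod 2) (Fin n → ZMod 2) :=
  LinearMap.range (binaryMatrix r n).vecMulLinear

/-- The encoded rows of `binaryMatrix r n` whose sum is the codeword of the message `m`, namely
those at the positions where `m` is nonzero. -/
def selectedRows (m : Fin k → ZMod 2) : List ℕ := ((List.finRange k).filter (m · ≠ 0)).map r

theorem vecMul_binaryMatrix (m : Fin k → ZMod 2) :
    m ᵥ* binaryMatrix r n = binaryWord n (xorSum (selectedRows r m)) := by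
  have hsmul : ∀ i, m i • binaryWord n (r i) = if m i ≠ 0 then binaryWord n (r i) else 0 := by
    intro i
    obtain h | h := (by decide : ∀ x : ZMod 2, x = 0 ∨ x = 1) (m i) <;> simp [h]
  calc m ᵥ* binaryMatrix r n = ∑ i, m i • binaryWord n (r i) := vecMul_eq_sum m _
    _ = ∑ i with m i ≠ 0, binaryWord n (r i) := by simp_rw [hsmul, ← Finset.sum_filter]
    _ = ((selectedRows r m).map (binaryWord n)).sum := by rw [selectedRows, List.map_map]; rfl
    _ = binaryWord n (xorSum (selectedRows r m)) := (binaryWord_xorSum n _).symm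

theorem selectedRows_mem_sublistsLen (m : Fin k → ZMod 2) :
    selectedRows r m ∈ (List.ofFn r).sublistsLen (hammingNorm m) := by
  rw [List.mem_sublistsLen, List.ofFn_eq_map, selectedRows, List.length_map,
    ← List.countP_eq_length_filter, hammingNorm_eq_countP_finRange]
  exact ⟨List.filter_sublist.map r, rfl⟩

end BinaryWords

section Enumeration

/-- Bit slicing: the bit of `bitLanes j l w` in lane `t` is the `j`-th bit of the sum modulo 2 of
the `t`-th member of `l.sublistsLen w`. -/
def bitLanes (j : ℕ) : List ℕ → ℕ → ℕ
  | _, 0 => 0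
  | [], _ + 1 => 0
  | x :: l, w + 1 => bitLanes j l (w + 1) |||
      ((bitLanes j l w ^^^ bif x.testBit j then 2 ^ l.length.choose w - 1 else 0) <<<
        l.length.choose (w + 1))

theorem testBit_bitLanes (j : ℕ) : ∀ (l : List ℕ) (w t : ℕ), (bitLanes j l w).testBit t =
    (l.sublistsLen w)[t]?.any fun s => (xorSum s).testBit j
  | _, 0, t => by cases t <;> simp [bitLanes, xorSum]
  | [], w + 1, t => by simp [bitLanes]
  | x :: l, w + 1, t => by
    have hxor (s : List ℕ) : (xorSum (x :: s)).testBit j = (x.testBit j ^^ (xorSum s).testBit j) :=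
      Nat.testBit_xor x (xorSum s) j
    have hlen (k : ℕ) : (l.sublistsLen k).length = l.length.choose k := List.length_sublistsLen ..
    simp only [bitLanes, Nat.testBit_or, Nat.testBit_shiftLeft, Nat.testBit_xor,
      testBit_bitLanes j l, List.sublistsLen_succ_cons]
    rcases lt_or_ge t (l.length.choose (w + 1)) with ht | ht
    · rw [List.getElem?_append_left (ht.trans_eq (hlen _).symm)]
      simp [ht.not_ge]
    · rw [List.getElem?_append_right ((hlen _).trans_le ht),
        List.getElem?_eq_none ((hlen _).trans_le ht), List.getElem?_map, hlen]
      generalize t - l.length.choose (w + 1) = u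
      rcases lt_or_ge u (l.length.choose w) with hu | hu
      · cases hx : x.testBit j <;> simp [ht, hu, hxor, hx]
      · cases x.testBit j <;> simp [ht, hu]

/-- Bit-sliced threshold: lane `t` of `atLeastLanes N l k` is set if `t < N` and at least `k`
entries of `l` have lane `t` set. -/
def atLeastLanes (N : ℕ) : List ℕ → ℕ → ℕ
  | _, 0 => 2 ^ N - 1
  | [], _ + 1 => 0
  | x :: l, k + 1 => atLeastLanes N l (k + 1) ||| (atLeastLanes N l k &&& x)

theorem le_countP_of_testBit_atLeastLanes {N t : ℕ} : ∀ {l : List ℕ} {k : ℕ},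
    (atLeastLanes N l k).testBit t → k ≤ l.countP (·.testBit t)
  | _, 0, _ => Nat.zero_le _
  | [], k + 1, h => by simp [atLeastLanes] at h
  | x :: l, k + 1, h => by
    simp only [atLeastLanes, Nat.testBit_or, Nat.testBit_and, Bool.or_eq_true,
      Bool.and_eq_true] at h
    rw [List.countP_cons]
    rcases h with h | ⟨h, hx⟩
    · exact (le_countP_of_testBit_atLeastLanes h).trans (Nat.le_add_right _ _)
    · simpa [hx] using le_countP_of_testBit_atLeastLanes h

/-- A decidable test, run on all lanes in parallel, for the sum of any `w` entries of `l` to have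
at least `d` ones among its lowest `n` bits. -/
def PassesWeightTest (l : List ℕ) (n w d : ℕ) : Prop :=
  atLeastLanes (l.length.choose w) ((List.finRange n).map fun j : Fin n => bitLanes j l w) d =
    2 ^ l.length.choose w - 1

instance (l : List ℕ) (n w d : ℕ) : Decidable (PassesWeightTest l n w d) :=
  inferInstanceAs (Decidable (_ = _))

theorem PassesWeightTest.le_hammingNorm {l : List ℕ} {n w d : ℕ} (h : PassesWeightTest l n w d)
    {s : List ℕ} (hs : s ∈ l.sublistsLen w) : d ≤ hammingNorm (binaryWord n (xorSum s)) := by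
  obtain ⟨t, ht, rfl⟩ := List.getElem_of_mem hs
  have hlane (j : ℕ) : (bitLanes j l w).testBit t = (xorSum (l.sublistsLen w)[t]).testBit j := by
    rw [testBit_bitLanes, List.getElem?_eq_getElem ht, Option.any_some]
  have hbit : (2 ^ l.length.choose w - 1).testBit t := by simpa using ht
  rw [← h] at hbit
  calc d ≤ ((List.finRange n).map fun j : Fin n => bitLanes j l w).countP (·.testBit t) :=
        le_countP_of_testBit_atLeastLanes hbit
    _ = hammingNorm (binaryWord n (xorSum (l.sublistsLen w)[t])) := by
        simp only [List.countP_map, Function.comp_def, hlane, hammingNorm_binaryWord]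

theorem PassesWeightTest.le_hammingNorm_vecMul {k n d : ℕ} {r : Fin k → ℕ} {m : Fin k → ZMod 2}
    (h : PassesWeightTest (List.ofFn r) n (hammingNorm m) d) :
    d ≤ hammingNorm (m ᵥ* binaryMatrix r n) := by
  rw [vecMul_binaryMatrix]
  exact h.le_hammingNorm (selectedRows_mem_sublistsLen r m)

end Enumeration

section QuasiCyclicCode

/-- The rows of a systematic generator matrix of a quasi-cyclic `[102, 29, 28]` code of index 2;
the bit of weight `2 ^ j` is the `j`-th coordinate. -/
def quasiCyclicRows : Fin 29 → ℕ := ![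
  0x234dcd6678668de843a0000001,
  0x22869864a09d54df4140000002,
  0x2fb1adfd4107637e4fc0000004,
  0x289cf9f622e807a24440000008,
  0x1c402f91a480d9267e40000010,
  0x00f57fbc2b3d4a565040000020,
  0x124d7320ea65e971baa0000040,
  0x03d5fef0acf529594100000080,
  0x2a7801e5d1f1282ea920000100,
  0x0f57fbc2b3d4a5650400000200,
  0x0b669ff3e759f465e5c0000400,
  0x3d5fef0acf5295941000000800,
  0x2d9a7fcf9d67d1979700001000,
  0x34b4e929e5b18f6742e0002000,
  0x14ef675ad50212811d40004000,
  0x1318f1a54e3de4aa0960008000,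
  0x30f0500d2c6ec7ec36a0010000,
  0x2f2e0bf340911f406620020000,
  0x020a15366940c687d860040000,
  0x1e3eb7a9a2d929ded9c0080000,
  0x082854d9a5031a1f6180100000,
  0x1bb713c0f3022a9324a0200000,
  0x20a15366940c687d8600400000,
  0x0d918265b46e27a4d120800000,
  0x2003d5fef0acf5295941000000,
  0x36460996d1b89e934482000000,
  0x2289cf9f622e807a2444000000,
  0x18d373599e19a37a10e8000000,
  0x28a1a61928275537d050000000]

/-- The positions of the information symbols of the code spanned by `quasiCyclicRows`. -/
def window : Fin 29 → Fin 102 := Fin.castLE (by decide)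

/-- The cyclic shift of the 102 positions by `2 * a`. -/
def evenShift (a : Fin 51) : Equiv.Perm (Fin 102) := Equiv.addRight ⟨2 * a, by omega⟩

theorem submatrix_window_eq_one : (binaryMatrix quasiCyclicRows 102).submatrix id window = 1 := by
  decide +kernel

theorem row_comp_add_two_mem_binaryCode (i : Fin 29) :
    binaryMatrix quasiCyclicRows 102 i ∘ (· + 2) ∈ binaryCode quasiCyclicRows 102 := by
  let v := binaryMatrix quasiCyclicRows 102 i ∘ (· + 2)
  have hv : binaryWord 102 (xorSum (selectedRows quasiCyclicRows (v ∘ window))) = v := by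
    revert i
    decide +kernel
  exact ⟨v ∘ window, (vecMul_binaryMatrix ..).trans hv⟩

theorem comp_evenShift_mem_binaryCode (a : Fin 51) :
    ∀ v ∈ binaryCode quasiCyclicRows 102, v ∘ evenShift a ∈ binaryCode quasiCyclicRows 102 := by
  have hstep : (⟨2 * a, by omega⟩ : Fin 102) = (a : ℕ) • 2 := by
    revert a
    decide
  have hshift : ⇑(evenShift a) = (· + (a : ℕ) • 2) := by rw [← hstep]; rfl
  rw [hshift]
  exact comp_add_nsmul_mem (comp_mem_range_vecMulLinear row_comp_add_two_mem_binaryCode) a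

theorem card_evenShift_window_le (j : Fin 102) :
    Finset.card {p : Fin 51 × Fin 29 | evenShift p.1 (window p.2) = j} ≤ 15 := by
  have hval (p : Fin 51 × Fin 29) :
      evenShift p.1 (window p.2) = j ↔ (p.2 + 2 * p.1 : ℕ) % 102 = j := Fin.ext_iff
  simp only [hval]
  calc Finset.card {p : Fin 51 × Fin 29 | (p.2 + 2 * p.1 : ℕ) % 102 = j}
      ≤ Finset.card {k : Fin 29 | (k : ℕ) % 2 = j % 2} := by
        refine Finset.card_le_card_of_injOn Prod.snd (fun p hp => ?_) fun p hp q hq hpq => ?_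
        · simp only [Finset.mem_coe, Finset.mem_filter_univ] at hp ⊢
          omega
        · simp only [Finset.mem_coe, Finset.mem_filter_univ] at hp hq
          refine Prod.ext (Fin.ext ?_) hpq
          omega
    _ ≤ 15 := by
        obtain h | h := Nat.mod_two_eq_zero_or_one j <;> rw [h] <;> decide

theorem passesWeightTest_quasiCyclicRows :
    ∀ w ∈ Finset.Icc 1 7, PassesWeightTest (List.ofFn quasiCyclicRows) 102 w 28 := by
  decide +kernel

theorem le_hammingNorm_of_mem_binaryCode_quasiCyclicRows :
    ∀ v ∈ binaryCode quasiCyclicRows 102, v ≠ 0 → 28 ≤ hammingNorm v := by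
  refine lt_hammingNorm_of_light_messages (c := 15) (d := 27) (w := 7) submatrix_window_eq_one
    comp_evenShift_mem_binaryCode card_evenShift_window_le (by simp) fun m hm hle => ?_
  have hmem : hammingNorm m ∈ Finset.Icc 1 7 := Finset.mem_Icc.2 ⟨hammingNorm_pos_iff.2 hm, hle⟩
  exact (passesWeightTest_quasiCyclicRows _ hmem).le_hammingNorm_vecMul

theorem finrank_binaryCode_quasiCyclicRows :
    Module.finrank (ZMod 2) (binaryCode quasiCyclicRows 102) = 29 := by
  rw [LinearMap.finrank_range_of_inj
    (vecMulLinear_injective_of_submatrix_eq_one submatrix_window_eq_one), Module.finrank_fin_fun]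

end QuasiCyclicCode

/-- there exists an `𝔽₂`-linear code of length 101, dimension 29
and minimum distance at least 27. -/
theorem stmt11 :
    ∃ C : Submodule (ZMod 2) (Fin 101 → ZMod 2),
      Module.finrank (ZMod 2) C = 29 ∧
      ∀ v ∈ C, v ≠ 0 → 27 ≤ hammingNorm v := by
  have hdist := le_hammingNorm_of_mem_binaryCode_quasiCyclicRows
  refine ⟨puncture (Fin.last 101) (binaryCode quasiCyclicRows 102), ?_,
    le_hammingNorm_of_mem_puncture _ hdist⟩
  rw [finrank_puncture _ fun v hv hne => le_trans (by simp) (hdist v hv hne)]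
  exact finrank_binaryCode_quasiCyclicRows
end

section
/- There exists an 𝔽_2-linear subspace C of 𝔽_2^{103} of dimension 29 such that every nonzero element of C has Hamming weight at least 28. -/
/-!
The code is a quasi-cyclic code of index two, padded with zero coordinates: it is invariant under
the simultaneous cyclic shift of two blocks of length 51, and its 29 information symbols are the
first 15 coordinates of the first block and the first 14 of the second. When a word of weight at
most 27 runs through its 51 translates, each nonzero coordinate meets an information symbol at most
15 times. As `15 * 27 < 8 * 51`, some translate has at most 7 nonzero information symbols, that is,
it is a sum of at most 7 rows of the systematic generator matrix. The weights of these sums are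
computed for all choices of `t` rows in parallel, with one lane of a bit vector per choice and
binary counters whose digits are such bit vectors.
-/

namespace QuasiCyclic

open Finset

section Systematic

variable {F K ι : Type*} [CommRing F] [DecidableEq K]
  {gen : K → ι → F} {pos : K → ι}

theorem sum_smul_apply_pos [Fintype K]
    (hsys : ∀ k l, gen k (pos l) = if k = l then 1 else 0) (c : K → F) (l : K) :
    (∑ k, c k • gen k) (pos l) = c l := by
  simp [Finset.sum_apply, hsys]

theorem linearIndependent_of_systematic [Finite K]
    (hsys : ∀ k l, gen k (pos l) = if k = l then 1 else 0) : LinearIndependent F gen := by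
  cases nonempty_fintype K
  rw [Fintype.linearIndependent_iff]
  intro c hc l
  rw [← sum_smul_apply_pos hsys c l, hc, Pi.zero_apply]

variable [Fintype K]

theorem eq_sum_smul_of_mem_span (hsys : ∀ k l, gen k (pos l) = if k = l then 1 else 0)
    {v : ι → F} (hv : v ∈ Submodule.span F (Set.range gen)) : v = ∑ k, v (pos k) • gen k := by
  obtain ⟨c, rfl⟩ := (Submodule.mem_span_range_iff_exists_fun F).mp hv
  simp only [sum_smul_apply_pos hsys]

theorem eq_sum_filter_of_mem_span {gen : K → ι → ZMod 2}
    (hsys : ∀ k l, gen k (pos l) = if k = l then 1 else 0)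
    {v : ι → ZMod 2} (hv : v ∈ Submodule.span (ZMod 2) (Set.range gen)) :
    v = ∑ k with v (pos k) ≠ 0, gen k := by
  conv_lhs => rw [eq_sum_smul_of_mem_span hsys hv]
  rw [sum_filter]
  refine sum_congr rfl fun k _ => ?_
  split_ifs with hk
  · have hone : v (pos k) = 1 := Fin.eq_one_of_ne_zero _ hk
    rw [hone, one_smul]
  · rw [not_not.mp hk, zero_smul]

end Systematic

section BlockShift

variable {σ G F : Type*}

/-- The simultaneous translation by `g` of all the blocks of a word. The coordinates of a word of a
quasi-cyclic code are pairs `(s, x)` of a block `s` and a position `x` in that block. -/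
def blockShift [AddGroup G] [Semiring F] (g : G) : (σ × G → F) →ₗ[F] (σ × G → F) :=
  LinearMap.funLeft F F fun p => (p.1, p.2 - g)

theorem blockShift_apply [AddGroup G] [Semiring F] (g : G) (v : σ × G → F) (p : σ × G) :
    blockShift g v p = v (p.1, p.2 - g) := rfl

theorem blockShift_zero [AddGroup G] [Semiring F] (v : σ × G → F) : blockShift 0 v = v := by
  ext p
  rw [blockShift_apply, sub_zero]

theorem blockShift_add [AddCommGroup G] [Semiring F] (g h : G) (v : σ × G → F) :
    blockShift (g + h) v = blockShift g (blockShift h v) := by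
  ext p
  simp only [blockShift_apply, sub_sub]

theorem blockShift_mem_of_blockShift_one_mem {m : ℕ} [NeZero m] [Semiring F]
    {C : Submodule F (σ × ZMod m → F)} (hC : ∀ v ∈ C, blockShift 1 v ∈ C) (g : ZMod m)
    {v : σ × ZMod m → F} (hv : v ∈ C) : blockShift g v ∈ C := by
  rw [← ZMod.natCast_zmod_val g]
  induction g.val with
  | zero => rwa [Nat.cast_zero, blockShift_zero]
  | succ n ih =>
    rw [Nat.cast_succ, add_comm, blockShift_add]
    exact hC _ ih

variable [Fintype G] [DecidableEq F]

theorem sum_card_blockShift_ne_zero [AddGroup G] [Semiring F] {K : Type*} [Fintype K]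
    (pos : K → σ × G) (v : σ × G → F) :
    ∑ g, #{k | blockShift g v (pos k) ≠ 0} = ∑ k, #{x | v ((pos k).1, x) ≠ 0} := by
  simp_rw [card_filter]
  rw [sum_comm]
  simp_rw [← card_filter]
  refine sum_congr rfl fun k _ => card_equiv (Equiv.subLeft (pos k).2) fun g => ?_
  rw [mem_filter_univ, mem_filter_univ, blockShift_apply, Equiv.subLeft_apply]

variable [Fintype σ]

theorem hammingNorm_eq_sum_blocks [Zero F] (v : σ × G → F) :
    hammingNorm v = ∑ s, #{x | v (s, x) ≠ 0} := by
  simp only [hammingNorm, card_filter, Fintype.sum_prod_type]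

variable [AddGroup G] [Semiring F]

theorem hammingNorm_blockShift (g : G) (v : σ × G → F) :
    hammingNorm (blockShift g v) = hammingNorm v := by
  rw [hammingNorm_eq_sum_blocks, hammingNorm_eq_sum_blocks]
  refine sum_congr rfl fun s _ => card_equiv (Equiv.subRight g) fun x => ?_
  rw [mem_filter_univ, mem_filter_univ, blockShift_apply, Equiv.subRight_apply]

theorem exists_card_blockShift_ne_zero_le [DecidableEq σ] {K : Type*} [Fintype K]
    {pos : K → σ × G} {a t : ℕ} (hpos : ∀ s, #{k | (pos k).1 = s} ≤ a) {v : σ × G → F}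
    (hv : a * hammingNorm v < (t + 1) * Fintype.card G) :
    ∃ g, #{k | blockShift g v (pos k) ≠ 0} ≤ t := by
  by_contra! hlarge
  refine hv.not_ge ?_
  calc (t + 1) * Fintype.card G = ∑ _g : G, (t + 1) := by
        rw [sum_const, card_univ, smul_eq_mul, mul_comm]
    _ ≤ ∑ g, #{k | blockShift g v (pos k) ≠ 0} := sum_le_sum fun g _ => hlarge g
    _ = ∑ s, ∑ k with (pos k).1 = s, #{x | v (s, x) ≠ 0} := by
        rw [sum_card_blockShift_ne_zero, sum_fiberwise' univ (fun k => (pos k).1)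
          fun s => #{x | v (s, x) ≠ 0}]
    _ ≤ ∑ s, a * #{x | v (s, x) ≠ 0} := sum_le_sum fun s _ => by
        rw [sum_const, smul_eq_mul]
        exact Nat.mul_le_mul_right _ (hpos s)
    _ = a * hammingNorm v := by rw [hammingNorm_eq_sum_blocks, mul_sum]

theorem lt_hammingNorm_of_blockShift_mem [DecidableEq σ] {C : Submodule F (σ × G → F)}
    (hC : ∀ g, ∀ v ∈ C, blockShift g v ∈ C) {K : Type*} [Fintype K] {pos : K → σ × G} {a t d : ℕ}
    (hpos : ∀ s, #{k | (pos k).1 = s} ≤ a) (hd : a * d < (t + 1) * Fintype.card G)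
    (hlow : ∀ v ∈ C, v ≠ 0 → #{k | v (pos k) ≠ 0} ≤ t → d < hammingNorm v)
    {v : σ × G → F} (hv : v ∈ C) (hv0 : v ≠ 0) : d < hammingNorm v := by
  by_contra! hle
  obtain ⟨g, hg⟩ := exists_card_blockShift_ne_zero_le hpos
    ((Nat.mul_le_mul_left a hle).trans_lt hd)
  have hshift0 : blockShift g v ≠ 0 := by
    rwa [← hammingNorm_ne_zero_iff, hammingNorm_blockShift, hammingNorm_ne_zero_iff]
  have hlt := hlow _ (hC g v hv) hshift0 hg
  rw [hammingNorm_blockShift] at hlt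
  exact hlt.not_ge hle

end BlockShift

section Extension

variable {F ι κ : Type*} [Fintype ι] [Fintype κ]

theorem hammingNorm_extend_zero [Zero F] [DecidableEq F] (e : ι ↪ κ) (v : ι → F) :
    hammingNorm (Function.extend e v 0) = hammingNorm v := by
  classical
  have hsupp : ({j | Function.extend e v 0 j ≠ 0} : Finset κ) =
      ({i | v i ≠ 0} : Finset ι).map e := by
    ext j
    simp only [mem_filter_univ, mem_map]
    constructor
    · intro hj
      obtain ⟨i, rfl⟩ : ∃ i, e i = j := by
        by_contra hji
        exact hj (Function.extend_apply' _ _ _ hji)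
      exact ⟨i, by rwa [e.injective.extend_apply] at hj, rfl⟩
    · rintro ⟨i, hi, rfl⟩
      rwa [e.injective.extend_apply]
  rw [hammingNorm, hsupp, card_map, hammingNorm]

theorem exists_submodule_of_card_le [Ring F] [DecidableEq F] (C : Submodule F (ι → F)) {d : ℕ}
    (hC : ∀ v ∈ C, v ≠ 0 → d ≤ hammingNorm v) (hcard : Fintype.card ι ≤ Fintype.card κ) :
    ∃ D : Submodule F (κ → F), Module.finrank F D = Module.finrank F C ∧
      ∀ v ∈ D, v ≠ 0 → d ≤ hammingNorm v := by
  obtain ⟨e⟩ := Function.Embedding.nonempty_of_card_le hcard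
  let extend := Function.ExtendByZero.linearMap F e
  have hinj : Function.Injective extend := Function.extend_injective e.injective (0 : κ → F)
  refine ⟨C.map extend, (C.equivMapOfInjective extend hinj).finrank_eq.symm, ?_⟩
  rintro _ ⟨v, hv, rfl⟩ hv0
  have hnorm : hammingNorm (extend v) = hammingNorm v := hammingNorm_extend_zero e v
  rw [hnorm]
  exact hC v hv fun h => hv0 (by rw [h, map_zero])

end Extension

section BitSlicing

variable {K ι : Type*}

/-- The sums of the sublists of `l` of length `t`, for a family `b` of bits over `l`. The `i`-th bit
is the sum over the `i`-th sublist, in an order of the sublists that does not depend on `b`; thus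
the vectors for the various coordinates of a family of words line up in the same lanes. -/
def sublistSums (b : K → Bool) : (l : List K) → (t : ℕ) → BitVec (l.length.choose t)
  | _, 0 => 0
  | [], _ + 1 => 0
  | k :: l, t + 1 =>
    (bif b k then ~~~sublistSums b l t else sublistSums b l t) ++ sublistSums b l (t + 1)

theorem toNat_getLsbD_cond_not {w i : ℕ} (hi : i < w) (b : Bool) (x : BitVec w) :
    (((bif b then ~~~x else x).getLsbD i).toNat : ZMod 2) = b.toNat + (x.getLsbD i).toNat := by
  cases b
  · simp
  · rw [cond_true, BitVec.getLsbD_not, decide_eq_true hi, Bool.true_and]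
    cases x.getLsbD i <;> decide

theorem getLsbD_sublistSums_cons_of_lt (b : K → Bool) (k : K) {l : List K} {t i : ℕ}
    (hi : i < l.length.choose (t + 1)) :
    (sublistSums b (k :: l) (t + 1)).getLsbD i = (sublistSums b l (t + 1)).getLsbD i :=
  BitVec.getLsbD_append.trans (if_pos hi)

theorem getLsbD_sublistSums_cons_add (b : K → Bool) (k : K) (l : List K) (t i : ℕ) :
    (sublistSums b (k :: l) (t + 1)).getLsbD (l.length.choose (t + 1) + i) =
      (bif b k then ~~~sublistSums b l t else sublistSums b l t).getLsbD i :=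
  BitVec.getLsbD_append.trans (by rw [if_neg (by omega), Nat.add_sub_cancel_left])

theorem exists_lane_sublistSums {l l' : List K} (h : l'.Sublist l) :
    ∃ i < l.length.choose l'.length, ∀ b : K → Bool,
      (((sublistSums b l l'.length).getLsbD i).toNat : ZMod 2) =
        (l'.map fun k => ((b k).toNat : ZMod 2)).sum := by
  induction h with
  | slnil => exact ⟨0, by simp, fun b => by simp [sublistSums]⟩
  | @cons l' l k _ ih =>
    cases l' with
    | nil => exact ⟨0, by simp, fun b => by simp [sublistSums]⟩
    | cons k' l' =>
      obtain ⟨i, hi, hsum⟩ := ih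
      refine ⟨i, hi.trans_le (Nat.choose_le_succ _ _), fun b => ?_⟩
      rw [← hsum b]
      exact congrArg (fun c : Bool => (c.toNat : ZMod 2)) (getLsbD_sublistSums_cons_of_lt b k hi)
  | @cons_cons l' l k _ ih =>
    obtain ⟨i, hi, hsum⟩ := ih
    refine ⟨l.length.choose (l'.length + 1) + i, ?_, fun b => ?_⟩
    · rw [List.length_cons, List.length_cons, Nat.choose_succ_succ']
      omega
    · rw [List.map_cons, List.sum_cons, ← hsum b, ← toNat_getLsbD_cond_not hi]
      exact congrArg (fun c : Bool => (c.toNat : ZMod 2))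
        (getLsbD_sublistSums_cons_add b k l l'.length i)

/-- Adds one bit to the binary counter in each lane, discarding overflow. A list of bit vectors
holds one counter per lane, the digits running through the list, least significant first. -/
def increment {w : ℕ} : List (BitVec w) → BitVec w → List (BitVec w)
  | [], _ => []
  | d :: ds, c => (d ^^^ c) :: increment ds (d &&& c)

/-- The value of the binary counter in lane `i`. -/
def laneValue {w : ℕ} (i : ℕ) (ds : List (BitVec w)) : ℕ :=
  Nat.ofDigits 2 (ds.map fun d => (d.getLsbD i).toNat)

theorem laneValue_cons {w : ℕ} (i : ℕ) (d : BitVec w) (ds : List (BitVec w)) :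
    laneValue i (d :: ds) = (d.getLsbD i).toNat + 2 * laneValue i ds := by
  rw [laneValue, List.map_cons, Nat.ofDigits_cons, laneValue]

theorem laneValue_increment_le {w : ℕ} (i : ℕ) (ds : List (BitVec w)) (c : BitVec w) :
    laneValue i (increment ds c) ≤ laneValue i ds + (c.getLsbD i).toNat := by
  induction ds generalizing c with
  | nil => exact Nat.zero_le _
  | cons d ds ih =>
    have hcarry := ih (d &&& c)
    have hadd : ((d ^^^ c).getLsbD i).toNat + 2 * ((d &&& c).getLsbD i).toNat =
        (d.getLsbD i).toNat + (c.getLsbD i).toNat := by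
      rw [BitVec.getLsbD_xor, BitVec.getLsbD_and]
      cases d.getLsbD i <;> cases c.getLsbD i <;> rfl
    rw [increment, laneValue_cons, laneValue_cons]
    omega

theorem laneValue_foldl_increment_le {w : ℕ} (i : ℕ) (cs ds : List (BitVec w)) :
    laneValue i (cs.foldl increment ds) ≤
      laneValue i ds + (cs.map fun c => (c.getLsbD i).toNat).sum := by
  induction cs generalizing ds with
  | nil => exact Nat.le_add_right _ _
  | cons c cs ih =>
    rw [List.foldl_cons, List.map_cons, List.sum_cons]
    have hstep := laneValue_increment_le i ds c
    have hrest := ih (increment ds c)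
    omega

theorem two_pow_le_laneValue {w i k : ℕ} {ds : List (BitVec w)} (hi : i < w)
    (hk : ds[k]? = some (BitVec.allOnes w)) : 2 ^ k ≤ laneValue i ds := by
  induction ds generalizing k with
  | nil => simp at hk
  | cons d ds ih =>
    rw [laneValue_cons]
    cases k with
    | zero =>
      obtain rfl : d = BitVec.allOnes w := by simpa using hk
      simp [hi]
    | succ k =>
      have hle := ih (by simpa using hk)
      rw [pow_succ]
      omega

theorem laneValue_map_fill {w i : ℕ} (hi : i < w) (bs : List Bool) :
    laneValue i (bs.map (BitVec.fill w)) = Nat.ofDigits 2 (bs.map Bool.toNat) := by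
  rw [laneValue, List.map_map]
  congr 2
  funext b
  cases b <;> simp [hi]

/-- Counters for the weights of all sums of `t` of the words `M k` with `k` in `l`, one per lane,
with binary digits `offset` at the start. -/
def weightCounters (M : K → ι → Bool) (l : List K) (coords : List ι) (offset : List Bool) (t : ℕ) :
    List (BitVec (l.length.choose t)) :=
  (coords.map fun p => sublistSums (fun k => M k p) l t).foldl increment
    (offset.map (BitVec.fill _))

theorem sum_map_toNat_le_hammingNorm [Fintype ι] {coords : List ι} (hcoords : coords.Nodup)
    {c : ι → Bool} {v : ι → ZMod 2} (hc : ∀ p, ((c p).toNat : ZMod 2) = v p) :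
    (coords.map fun p => (c p).toNat).sum ≤ hammingNorm v := by
  classical
  have hbit (p : ι) : (c p).toNat = if v p ≠ 0 then 1 else 0 := by
    rw [← hc]
    cases c p <;> decide
  simp only [hbit]
  rw [← List.sum_toFinset _ hcoords, hammingNorm, card_filter]
  exact sum_le_sum_of_subset (subset_univ _)

theorem two_pow_le_add_hammingNorm_sum [Fintype ι] {M : K → ι → Bool} {l : List K} (hl : l.Nodup)
    {coords : List ι} (hcoords : coords.Nodup) {offset : List Bool} {S : Finset K}
    (hS : ∀ k ∈ S, k ∈ l) {e : ℕ}
    (he : (weightCounters M l coords offset #S)[e]? = some (BitVec.allOnes _)) :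
    2 ^ e ≤ Nat.ofDigits 2 (offset.map Bool.toNat) +
      hammingNorm (∑ k ∈ S, fun p => ((M k p).toNat : ZMod 2)) := by
  classical
  set l' := l.filter (· ∈ S)
  have hl'S : l'.toFinset = S := by
    ext k
    simpa [l'] using hS k
  have hl'nodup : l'.Nodup := hl.filter _
  have hcard : #S = l'.length := by rw [← hl'S, List.toFinset_card_of_nodup hl'nodup]
  obtain ⟨i, hi, hsum⟩ := exists_lane_sublistSums (l.filter_sublist (p := (· ∈ S)))
  rw [hcard] at he
  have hweight := sum_map_toNat_le_hammingNorm hcoords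
    (v := ∑ k ∈ S, fun p => ((M k p).toNat : ZMod 2)) fun p => by
      rw [hsum fun k => M k p, Finset.sum_apply, ← List.sum_toFinset _ hl'nodup, hl'S]
  have hcount := laneValue_foldl_increment_le i
    (coords.map fun p => sublistSums (fun k => M k p) l l'.length) (offset.map (BitVec.fill _))
  rw [laneValue_map_fill hi, List.map_map] at hcount
  exact ((two_pow_le_laneValue hi he).trans hcount).trans (Nat.add_le_add_left hweight _)

end BitSlicing

section Code

theorem getLsbD_rotateLeft_one_add_one_mod {m i : ℕ} (w : BitVec m) (hi : i < m) :
    (w.rotateLeft 1).getLsbD ((i + 1) % m) = w.getLsbD i := by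
  obtain rfl | hm : m = 1 ∨ 1 < m := by omega
  · simp [Nat.lt_one_iff.mp hi]
  rw [BitVec.getLsbD_rotateLeft, Nat.mod_eq_of_lt hm]
  obtain hlt | rfl : i + 1 < m ∨ m = i + 1 := by omega
  · simp [Nat.mod_eq_of_lt hlt, hlt]
  · simp

/-- The word over `ZMod 2` whose blocks have the bits of the `w s` as coordinates. -/
def toVector {σ : Type*} {m : ℕ} (w : σ → BitVec m) : σ × ZMod m → ZMod 2 :=
  fun p => ((w p.1).getLsbD p.2.val).toNat

theorem toVector_zero {σ : Type*} {m : ℕ} : toVector (0 : σ → BitVec m) = 0 := by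
  ext p
  simp [toVector]

theorem toVector_xor {σ : Type*} {m : ℕ} (w w' : σ → BitVec m) :
    toVector (fun s => w s ^^^ w' s) = toVector w + toVector w' := by
  ext p
  rw [Pi.add_apply, toVector, toVector, toVector, BitVec.getLsbD_xor]
  cases (w p.1).getLsbD p.2.val <;> cases (w' p.1).getLsbD p.2.val <;> decide

theorem toVector_bif {σ : Type*} {m : ℕ} (b : Bool) (w : σ → BitVec m) :
    toVector (fun s => bif b then w s else 0) = (b.toNat : ZMod 2) • toVector w := by
  cases b
  · exact toVector_zero.trans (zero_smul _ _).symm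
  · exact (one_smul _ _).symm

theorem blockShift_one_toVector {σ : Type*} {m : ℕ} [NeZero m] (w : σ → BitVec m) :
    blockShift 1 (toVector w) = toVector fun s => (w s).rotateLeft 1 := by
  ext ⟨s, x⟩
  obtain ⟨y, rfl⟩ : ∃ y, y + 1 = x := ⟨x - 1, sub_add_cancel x 1⟩
  rw [blockShift_apply, toVector, toVector, add_sub_cancel_right, ZMod.val_add,
    ZMod.val_one_eq_one_mod, Nat.add_mod_mod, getLsbD_rotateLeft_one_add_one_mod _ y.val_lt]

/-- Two words whose translates span the code. With bit `i` read as `X ^ i`, the code is the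
`𝔽₂[X]`-module generated by `(g, g f)` and `(0, h)` modulo `X ^ 51 - 1`, for a divisor `g` of degree
24 and `h = (X ^ 51 - 1) / (X ^ 2 + X + 1)`; the seeds are its words with the unit vectors of the
first information symbol of either block as information symbols. -/
def seed : Fin 2 → Fin 2 → BitVec 51 :=
  ![![0x1fcbdc89e8001, 0x3698d6c57c000], ![0x6358e8b6a8000, 0x509bfad9b8001]]

/-- Translation by one position, followed by elimination of the bits that pass from the last to the
first position of a block, which is an information symbol. -/
def feedbackShift (w : Fin 2 → BitVec 51) (s : Fin 2) : BitVec 51 :=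
  (w s).rotateLeft 1 ^^^ (bif (w 0).msb then seed 0 s else 0) ^^^
    (bif (w 1).msb then seed 1 s else 0)

theorem toVector_feedbackShift (w : Fin 2 → BitVec 51) :
    toVector (feedbackShift w) = blockShift 1 (toVector w) +
      ((w 0).msb.toNat : ZMod 2) • toVector (seed 0) +
      ((w 1).msb.toNat : ZMod 2) • toVector (seed 1) := by
  unfold feedbackShift
  rw [toVector_xor, toVector_xor, toVector_bif, toVector_bif, blockShift_one_toVector]

/-- The translates of a seed, reduced so as to have a single nonzero information symbol. -/
def row (s : Fin 2) (k : ℕ) : Fin 2 → BitVec 51 := feedbackShift^[k] (seed s)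

/-- The number of information symbols in each block. -/
def infoLength : Fin 2 → ℕ := ![15, 14]

/-- The index type of the generators, and of the information symbols. -/
abbrev Info : Type := (s : Fin 2) × Fin (infoLength s)

/-- The coordinate of an information symbol: each block starts with its information symbols. -/
def infoPos (k : Info) : Fin 2 × ZMod 51 := (k.1, (k.2 : ℕ))

/-- The systematic generator matrix as a matrix of bits, for evaluation by the kernel. -/
def generatorBit (k : Info) (p : Fin 2 × ZMod 51) : Bool := (row k.1 k.2 p.1).getLsbD p.2.val

/-- The rows of the systematic generator matrix, as vectors over `ZMod 2`. -/
def generator (k : Info) : Fin 2 × ZMod 51 → ZMod 2 := toVector (row k.1 k.2)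

/-- The code of length 102 and dimension 29 generated by the rows. -/
def code : Submodule (ZMod 2) (Fin 2 × ZMod 51 → ZMod 2) :=
  Submodule.span (ZMod 2) (Set.range generator)

theorem row_infoLength : ∀ s, row s (infoLength s) = 0 := by decide +kernel

theorem generator_infoPos : ∀ k l : Info, generator k (infoPos l) = if k = l then 1 else 0 := by
  decide +kernel

theorem finrank_code : Module.finrank (ZMod 2) code = 29 := by
  rw [code, finrank_span_eq_card (linearIndependent_of_systematic generator_infoPos)]
  rfl

theorem toVector_row_mem_code {s : Fin 2} {k : ℕ} (hk : k ≤ infoLength s) :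
    toVector (row s k) ∈ code := by
  obtain hk | rfl := hk.lt_or_eq
  · exact Submodule.subset_span ⟨⟨s, k, hk⟩, rfl⟩
  · rw [row_infoLength]
    exact toVector_zero ▸ code.zero_mem

theorem toVector_seed_mem_code (s : Fin 2) : toVector (seed s) ∈ code :=
  toVector_row_mem_code (k := 0) (Nat.zero_le _)

theorem blockShift_generator_mem_code (k : Info) : blockShift 1 (generator k) ∈ code := by
  have hnext : toVector (row k.1 (k.2 + 1)) ∈ code := toVector_row_mem_code k.2.isLt
  rw [row, Function.iterate_succ_apply', toVector_feedbackShift] at hnext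
  rwa [Submodule.add_mem_iff_left _ (code.smul_mem _ (toVector_seed_mem_code 1)),
    Submodule.add_mem_iff_left _ (code.smul_mem _ (toVector_seed_mem_code 0))] at hnext

theorem blockShift_one_mem_code : ∀ v ∈ code, blockShift 1 v ∈ code := by
  have hle : code ≤ code.comap (blockShift 1) := by
    rw [code, Submodule.span_le]
    rintro _ ⟨k, rfl⟩
    exact blockShift_generator_mem_code k
  exact hle

/-- An enumeration of `Info` that can be evaluated, unlike `Finset.univ.toList`. -/
def infoList : List Info := (List.finRange 2).sigma fun s => List.finRange (infoLength s)

/-- An enumeration of the coordinates that can be evaluated. -/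
def coordList : List (Fin 2 × ZMod 51) := List.finRange 2 ×ˢ List.finRange 51

set_option maxRecDepth 100000 in
/-- The offset is `2 ^ 6 - 28`, so that the digit of index `6` tells whether a weight is at
least `28`. -/
theorem getElem?_weightCounters_generatorBit : ∀ t < 7,
    (weightCounters generatorBit infoList coordList
      [false, false, true, false, false, true, false] (t + 1))[6]? = some (BitVec.allOnes _) := by
  decide +kernel

theorem lt_hammingNorm_sum_generator {S : Finset Info} (hS : S.Nonempty) (hcard : #S ≤ 7) :
    27 < hammingNorm (∑ k ∈ S, generator k) := by
  have hinfo : infoList.Nodup := (List.nodup_finRange 2).sigma fun s => List.nodup_finRange _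
  have hcoord : coordList.Nodup := (List.nodup_finRange 2).product (List.nodup_finRange 51)
  have hmem (k : Info) : k ∈ infoList :=
    List.mem_sigma.mpr ⟨List.mem_finRange _, List.mem_finRange _⟩
  have hdigit := getElem?_weightCounters_generatorBit (#S - 1) (by have := hS.card_pos; omega)
  rw [Nat.sub_add_cancel hS.card_pos] at hdigit
  have hle : 2 ^ 6 ≤ 36 + hammingNorm (∑ k ∈ S, generator k) :=
    two_pow_le_add_hammingNorm_sum hinfo hcoord (fun k _ => hmem k) hdigit
  omega

theorem lt_hammingNorm_of_card_infoPos_ne_zero_le {v : Fin 2 × ZMod 51 → ZMod 2} (hv : v ∈ code)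
    (hv0 : v ≠ 0) (hcard : #{k | v (infoPos k) ≠ 0} ≤ 7) : 27 < hammingNorm v := by
  have hsum : v = ∑ k with v (infoPos k) ≠ 0, generator k :=
    eq_sum_filter_of_mem_span generator_infoPos hv
  have hne : ({k | v (infoPos k) ≠ 0} : Finset Info).Nonempty :=
    nonempty_of_sum_ne_zero (hsum ▸ hv0)
  rw [hsum]
  exact lt_hammingNorm_sum_generator hne hcard

theorem le_hammingNorm_of_mem_code {v : Fin 2 × ZMod 51 → ZMod 2} (hv : v ∈ code)
    (hv0 : v ≠ 0) : 28 ≤ hammingNorm v :=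
  lt_hammingNorm_of_blockShift_mem (pos := infoPos) (a := 15) (t := 7)
    (fun g _ hw => blockShift_mem_of_blockShift_one_mem blockShift_one_mem_code g hw)
    (by decide) (by rw [ZMod.card]; norm_num)
    (fun _ => lt_hammingNorm_of_card_infoPos_ne_zero_le) hv hv0

end Code

end QuasiCyclic

theorem stmt14_general (n : ℕ) (hn : 102 ≤ n) :
    ∃ C : Submodule (ZMod 2) (Fin n → ZMod 2),
      Module.finrank (ZMod 2) C = 29 ∧
      ∀ v ∈ C, v ≠ 0 → 28 ≤ hammingNorm v := by
  have hcard : Fintype.card (Fin 2 × ZMod 51) ≤ Fintype.card (Fin n) := by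
    simpa [ZMod.card] using hn
  rw [← QuasiCyclic.finrank_code]
  exact QuasiCyclic.exists_submodule_of_card_le QuasiCyclic.code
    (fun _ => QuasiCyclic.le_hammingNorm_of_mem_code) hcard

/-- there exists an `𝔽₂`-linear code of length 103, dimension 29
and minimum distance at least 28. -/
theorem stmt14 :
    ∃ C : Submodule (ZMod 2) (Fin 103 → ZMod 2),
      Module.finrank (ZMod 2) C = 29 ∧
      ∀ v ∈ C, v ≠ 0 → 28 ≤ hammingNorm v :=
  stmt14_general 103 (by norm_num)
end
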